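/- arXiv:2407.04817 — 3 statements merged into one kernel-verified Lean document; each statement's English description precedes it below -/
import Mathlib

section
/- (i) Every marked ribbon graph (G,≤) is isomorphic, as a marked ribbon graph, to △(∇(G,≤)). (ii) Every gentle bound quiver (Q,I) is isomorphic, as a bound quiver, to ∇(△(Q,I)). Here an isomorphism of marked ribbon graphs is a pair of bijections on vertices and half-edges commuting with z and ι and preserving the partial orders, and an isomorphism of bound quivers is a quiver isomorphism carrying one relation set onto the other. -/
set_option autoImplicit false

attribute [local instance] Classical.propDecidable

/-- A marked ribbon graph `(G, ≤)`: a finite graph given by half-edges (a set `H` of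
half-edges with an incidence map `z : H → V` and a fixed-point-free involution `ι`
whose orbits are the edges), together with a partial order `≤` on `H` in which two
half-edges are comparable exactly when they are incident to the same vertex; the graph
is required to be connected, without isolated vertices (`z` surjective) and with a
vertex of degree at least two. -/
structure MRG (V H : Type) where
  z : H → V
  invh : H → H
  inv_inv : ∀ h, invh (invh h) = h
  inv_ne : ∀ h, invh h ≠ h
  z_surj : Function.Surjective z
  le : H → H → Prop
  le_refl : ∀ h, le h h
  le_trans : ∀ {a b c}, le a b → le b c → le a c
  le_antisymm : ∀ {a b}, le a b → le b a → a = b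
  comp_iff : ∀ a b, (le a b ∨ le b a) ↔ z a = z b
  connected : ∀ u v : V,
    Relation.ReflTransGen (fun x y => ∃ h, z h = x ∧ z (invh h) = y) u v
  thick : ∃ h h' : H, h ≠ h' ∧ z h = z h'

namespace MRG

variable {V H : Type}

/-- The type of edges of the graph: orbits of the involution. -/
def E (G : MRG V H) : Type := Quot (fun a b : H => b = G.invh a)

/-- The edge containing a given half-edge. -/
def edge (G : MRG V H) (h : H) : G.E := Quot.mk _ h

/-- The strict order on half-edges. -/
def lt (G : MRG V H) (a b : H) : Prop := G.le a b ∧ a ≠ b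

/-- `b` covers `a`: `a` is a direct predecessor of `b` (equivalently `b` is the direct
successor of `a`) with respect to `≤`. -/
def Cov (G : MRG V H) (a b : H) : Prop :=
  G.lt a b ∧ ∀ c, G.lt a c → G.lt c b → False

end MRG

/-- A bound-quiver datum: a quiver (source and target maps on a set of arrows) together
with a set of length-two relations; `rel a b` means that the length-two path `ab`
(composable, i.e. `src a = tgt b`; paths are written from right to left) lies in the
generating set of relations of the ideal `I`. -/
structure BQuiv (V A : Type) where
  src : A → V
  tgt : A → V
  rel : A → A → Prop

namespace BQuiv

variable {V A : Type}

/-- `l` is (the list of arrows of) a path of the quiver, written from right to left: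
`l = [a₁, a₂, …, a_ℓ]` represents `a₁a₂⋯a_ℓ` and we ask `src aₜ = tgt aₜ₊₁`. -/
def PathChain (Q : BQuiv V A) (l : List A) : Prop :=
  l.Chain' (fun a b => Q.src a = Q.tgt b)

/-- The degree of a vertex: the number of outgoing plus the number of incoming arrows. -/
noncomputable def deg (Q : BQuiv V A) (v : V) : ℕ :=
  Nat.card {a : A // Q.src a = v} + Nat.card {a : A // Q.tgt a = v}

/-- `(Q, I)` is a gentle bound quiver. -/
structure IsGentle (Q : BQuiv V A) : Prop where
  /-- relations are composable length-two paths -/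
  rel_comp : ∀ a b, Q.rel a b → Q.src a = Q.tgt b
  /-- at most two outgoing arrows at every vertex -/
  out_le : ∀ v, Nat.card {a : A // Q.src a = v} ≤ 2
  /-- at most two incoming arrows at every vertex -/
  in_le : ∀ v, Nat.card {a : A // Q.tgt a = v} ≤ 2
  /-- for every arrow `b` there is at most one arrow `a` with `ab ∉ I` -/
  unique_nonrel_post : ∀ b a a', Q.src a = Q.tgt b → Q.src a' = Q.tgt b →
    ¬ Q.rel a b → ¬ Q.rel a' b → a = a'
  /-- for every arrow `b` there is at most one arrow `c` with `bc ∉ I` -/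
  unique_nonrel_pre : ∀ b c c', Q.src b = Q.tgt c → Q.src b = Q.tgt c' →
    ¬ Q.rel b c → ¬ Q.rel b c' → c = c'
  /-- for every arrow `b` there is at most one arrow `a` with `ab ∈ I` -/
  unique_rel_post : ∀ b a a', Q.rel a b → Q.rel a' b → a = a'
  /-- for every arrow `b` there is at most one arrow `c` with `bc ∈ I` -/
  unique_rel_pre : ∀ b c c', Q.rel b c → Q.rel b c' → c = c'
  /-- admissibility: there is `m ≥ 2` such that every path of length `m` contains a
  length-two subpath lying in the relation set -/
  admissible : ∃ m, 2 ≤ m ∧ ∀ l : List A, l.length = m → Q.PathChain l →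
    ¬ l.Chain' (fun a b => ¬ Q.rel a b)
  /-- the quiver is connected -/
  connected : ∀ u v : V, Relation.ReflTransGen
    (fun x y => ∃ a, (Q.src a = x ∧ Q.tgt a = y) ∨ (Q.src a = y ∧ Q.tgt a = x)) u v
  /-- the quiver has at least one arrow -/
  has_arrow : Nonempty A

/-- A path of the quiver `Q`, with a base (source) vertex so that trivial paths make
sense.  The arrows are written from right to left. -/
structure Path (Q : BQuiv V A) where
  base : V
  arrows : List A
  chain : arrows.Chain' (fun a b => Q.src a = Q.tgt b)
  base_eq : ∀ a, arrows.getLast? = some a → Q.src a = base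

variable {Q : BQuiv V A}

/-- The source vertex of a path. -/
def Path.srcV (p : Path Q) : V := p.base

/-- The target vertex of a path. -/
def Path.tgtV (p : Path Q) : V := p.arrows.head?.elim p.base Q.tgt

/-- The vertex of a path sitting between its first `n` arrows and the rest:
the center of the corresponding split of the path. -/
def Path.vertexAt (p : Path Q) (n : ℕ) : V :=
  (p.arrows.drop n).head?.elim p.base Q.tgt

/-- A path is permitted if none of its length-two subpaths is a relation. -/
def Path.Permitted (p : Path Q) : Prop :=
  p.arrows.Chain' (fun a b => ¬ Q.rel a b)

/-- A path is forbidden if each of its length-two subpaths is a relation. -/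
def Path.Forbidden (p : Path Q) : Prop :=
  p.arrows.Chain' (fun a b => Q.rel a b)

/-- Permitted threads: maximal non-trivial permitted paths, together with the trivial
paths `e_i` at vertices `i` with `deg i = 1`, or `deg i = 2` with the two arrows
`α, β` at `i` satisfying `src α = tgt β = i` and `αβ ∉ I`. -/
def IsPermThread (Q : BQuiv V A) (p : Path Q) : Prop :=
  (p.arrows ≠ [] ∧ p.Permitted ∧
    (∀ a b, p.arrows.head? = some b → Q.src a = Q.tgt b → Q.rel a b) ∧
    (∀ a c, p.arrows.getLast? = some a → Q.src a = Q.tgt c → Q.rel a c)) ∨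
  (p.arrows = [] ∧ (Q.deg p.base = 1 ∨ (Q.deg p.base = 2 ∧
    ∃ α β, Q.src α = p.base ∧ Q.tgt β = p.base ∧ ¬ Q.rel α β)))

/-- Forbidden threads: maximal non-trivial forbidden paths, together with the trivial
paths `e_i` at vertices `i` with `deg i = 1`, or `deg i = 2` with the two arrows
`α, β` at `i` satisfying `src α = tgt β = i` and `αβ ∈ I`. -/
def IsForbThread (Q : BQuiv V A) (p : Path Q) : Prop :=
  (p.arrows ≠ [] ∧ p.Forbidden ∧
    (∀ a b, p.arrows.head? = some b → Q.src a = Q.tgt b → ¬ Q.rel a b) ∧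
    (∀ a c, p.arrows.getLast? = some a → Q.src a = Q.tgt c → ¬ Q.rel a c)) ∨
  (p.arrows = [] ∧ (Q.deg p.base = 1 ∨ (Q.deg p.base = 2 ∧
    ∃ α β, Q.src α = p.base ∧ Q.tgt β = p.base ∧ Q.rel α β)))

end BQuiv

namespace BQuiv

variable {V A : Type}

/-- The type of permitted threads of `(Q, I)`: the vertices of the associated marked
ribbon graph `△(Q, I)`. -/
def PThread (Q : BQuiv V A) : Type := {p : Path Q // IsPermThread Q p}

/-- The type of split permitted threads of `(Q, I)`: a permitted thread together with a
cut position.  These are the half-edges of the associated marked ribbon graph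
`△(Q, I)`. -/
def PSplit (Q : BQuiv V A) : Type := {x : PThread Q × ℕ // x.2 ≤ x.1.1.arrows.length}

/-- The thread (vertex of `△(Q, I)`) over which a split permitted thread lies. -/
def PSplit.thread {Q : BQuiv V A} (x : PSplit Q) : PThread Q := x.1.1

/-- The cut position of a split permitted thread. -/
def PSplit.idx {Q : BQuiv V A} (x : PSplit Q) : ℕ := x.1.2

/-- The center of a split permitted thread `(η″, η′)`: the vertex `s(η″) = t(η′)`.
The centers realize the bijection between the edges of `△(Q, I)` and the vertices
of `Q`. -/
def PSplit.center {Q : BQuiv V A} (x : PSplit Q) : V :=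
  x.1.1.1.vertexAt x.1.2

end BQuiv

namespace MRG

variable {V H : Type}

/-- The type of arrows of the bound quiver `∇(G, ≤)`: pairs `(h′, h)` of half-edges
with `h` the direct predecessor of `h′` with respect to `≤`. -/
def NArrow (G : MRG V H) : Type := {p : H × H // G.Cov p.2 p.1}

/-- The bound quiver `∇(G, ≤)` of a marked ribbon graph: its vertices are the edges of
`G`, its arrows the pairs `(h′, h)` with `h` the direct predecessor of `h′`, with
source `{h, ιh}` and target `{h′, ιh′}`, and its relations all length-two paths
`(h′₂, h₂)(h′₁, h₁)` with `h′₁ = ι h₂`. -/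
def nabla (G : MRG V H) : BQuiv G.E G.NArrow where
  src p := G.edge p.1.2
  tgt p := G.edge p.1.1
  rel a b := b.1.1 = G.invh a.1.2

end MRG

open BQuiv MRG

/-- `G'` is (a realization of) the marked ribbon graph `△(Q, I)` of the gentle bound
quiver `(Q, I)`: its vertices are the permitted threads, its half-edges the split
permitted threads, the incidence map sends a split permitted thread to its thread, the
involution exchanges the two split permitted threads with a common center, and the
order compares, within one thread, the lengths of the right-hand factors. -/
def IsDeltaOf {V A V' H' : Type} (Q : BQuiv V A) (G' : MRG V' H') : Prop :=
  ∃ (fV : PThread Q ≃ V') (fH : PSplit Q ≃ H'),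
    (∀ x : PSplit Q, G'.z (fH x) = fV x.thread) ∧
    (∀ x y : PSplit Q, x ≠ y → x.center = y.center → G'.invh (fH x) = fH y) ∧
    (∀ x y : PSplit Q, G'.le (fH x) (fH y) ↔ (x.thread = y.thread ∧ y.idx ≤ x.idx))

/-- Isomorphism of marked ribbon graphs: bijections on vertices and half-edges
commuting with `z` and `ι` and preserving the partial orders. -/
def MRGIso {V H V' H' : Type} (G : MRG V H) (G' : MRG V' H') : Prop :=
  ∃ (eV : V ≃ V') (eH : H ≃ H'),
    (∀ h, G'.z (eH h) = eV (G.z h)) ∧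
    (∀ h, G'.invh (eH h) = eH (G.invh h)) ∧
    (∀ a b, G'.le (eH a) (eH b) ↔ G.le a b)

/-- Isomorphism of bound quivers: a quiver isomorphism carrying one relation set onto
the other. -/
def BQIso {V A V' A' : Type} (Q : BQuiv V A) (Q' : BQuiv V' A') : Prop :=
  ∃ (eV : V ≃ V') (eA : A ≃ A'),
    (∀ a, Q'.src (eA a) = eV (Q.src a)) ∧
    (∀ a, Q'.tgt (eA a) = eV (Q.tgt a)) ∧
    (∀ a b, Q'.rel (eA a) (eA b) ↔ Q.rel a b)

/-!
Both parts follow from one observation about a bound quiver `Q` whose vertices are identified with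
the edges of a marked ribbon graph `G` and whose arrows are identified with the covering pairs
`lo a ⋖ hi a` of half-edges, in such a way that `ab` is a relation exactly when `hi b = ι (lo a)`.
Then `ab` is a permitted path exactly when `hi b = lo a`, so a nontrivial maximal permitted path
runs through the linearly ordered set of all half-edges of a vertex of degree at least two, and its
cut positions are these half-edges. The remaining vertices are the leaves. As `G` is connected and
not a single edge, at most one half-edge of each edge ends in a leaf, and the degree condition on
trivial threads picks out exactly the edges having such a half-edge. Hence `G` is a copy of `△ Q`.

For (i), `Q = ∇ G` is of this form. For (ii), gentleness says that every vertex of `Q` has two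
sides, each with at most one incoming and at most one outgoing arrow, the relations being the paths
that change sides. The pairs of a vertex and a side are the half-edges of a suitable `G`, ordered
along the arrows; admissibility makes this relation antisymmetric with finite chains. Then
`Q ≅ ∇ G ≅ ∇ (△ Q)`.
-/

/-! ### The order on the half-edges -/

namespace MRG

section Order

variable {V H : Type} (G : MRG V H)

/-- The order on the half-edges of `G` as a Mathlib partial order: its strict order is `G.lt` and
its covering relation is `G.Cov`. -/
abbrev halfEdgeOrder : PartialOrder H where
  le := G.le
  lt := G.lt
  le_refl := G.le_refl
  le_trans _ _ _ := G.le_trans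
  lt_iff_le_not_ge _ _ :=
    and_congr_right fun hab => not_congr ⟨fun h => h ▸ G.le_refl _, G.le_antisymm hab⟩
  le_antisymm _ _ := G.le_antisymm

variable {G}

protected theorem lt_of_le_of_lt {h k m : H} (hk : G.le h k) (hm : G.lt k m) : G.lt h m :=
  @_root_.lt_of_le_of_lt _ G.halfEdgeOrder.toPreorder h k m hk hm

theorem z_eq_of_le {h k : H} (hk : G.le h k) : G.z h = G.z k :=
  (G.comp_iff h k).1 (Or.inl hk)

theorem Cov.z_eq {h k : H} (hk : G.Cov h k) : G.z h = G.z k :=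
  z_eq_of_le hk.1.1

theorem Cov.eq_of_left {h k k' : H} (hk : G.Cov h k) (hk' : G.Cov h k') : k = k' := by
  by_contra hne
  rcases (G.comp_iff k k').2 (hk.z_eq.symm.trans hk'.z_eq) with hle | hle
  · exact hk'.2 k hk.1 ⟨hle, hne⟩
  · exact hk.2 k' hk'.1 ⟨hle, Ne.symm hne⟩

theorem Cov.eq_of_right {h h' k : H} (hk : G.Cov h k) (hk' : G.Cov h' k) : h = h' := by
  by_contra hne
  rcases (G.comp_iff h h').2 (hk.z_eq.trans hk'.z_eq.symm) with hle | hle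
  · exact hk.2 h' ⟨hle, hne⟩ hk'.1
  · exact hk'.2 h ⟨hle, Ne.symm hne⟩ hk.1

variable (G) in
/-- `h` is the least half-edge at its vertex. -/
def IsBot (h : H) : Prop := ∀ k, G.z k = G.z h → G.le h k

variable (G) in
/-- `h` is the greatest half-edge at its vertex. -/
def IsTop (h : H) : Prop := ∀ k, G.z k = G.z h → G.le k h

variable (G) in
/-- `h` is the only half-edge at its vertex, i.e. its vertex has degree one. -/
def IsIsolated (h : H) : Prop := G.IsBot h ∧ G.IsTop h

theorem IsBot.eq {h k : H} (hh : G.IsBot h) (hk : G.IsBot k) (hz : G.z h = G.z k) : h = k :=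
  G.le_antisymm (hh k hz.symm) (hk h hz)

theorem IsTop.eq {h k : H} (hh : G.IsTop h) (hk : G.IsTop k) (hz : G.z h = G.z k) : h = k :=
  G.le_antisymm (hk h hz) (hh k hz.symm)

theorem IsIsolated.eq {h k : H} (hh : G.IsIsolated h) (hz : G.z k = G.z h) : k = h :=
  G.le_antisymm (hh.2 k hz) (hh.1 k hz)

theorem IsIsolated.not_invh {h : H} (hh : G.IsIsolated h) : ¬ G.IsIsolated (G.invh h) := by
  intro hι
  have only_ends : ∀ v, v = G.z h ∨ v = G.z (G.invh h) := by
    intro v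
    induction G.connected (G.z h) v with
    | refl => exact Or.inl rfl
    | tail _ step ih =>
      obtain ⟨k, rfl, rfl⟩ := step
      rcases ih with hz | hz
      · exact Or.inr (by rw [hh.eq hz])
      · exact Or.inl (by rw [hι.eq hz, G.inv_inv])
  obtain ⟨k, k', hne, hz⟩ := G.thick
  rcases only_ends (G.z k) with h₀ | h₀
  · exact hne ((hh.eq h₀).trans (hh.eq (hz.symm.trans h₀)).symm)
  · exact hne ((hι.eq h₀).trans (hι.eq (hz.symm.trans h₀)).symm)

variable (G) in
/-- Every vertex has finite degree. As the half-edges at a vertex are linearly ordered, this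
amounts to well-foundedness of their order in both directions. -/
class LocallyFinite : Prop where
  wf_lt : WellFounded G.lt
  wf_gt : WellFounded (Function.swap G.lt)

theorem LocallyFinite.of_finite_fibers (hG : ∀ v, (G.z ⁻¹' {v}).Finite) : G.LocallyFinite := by
  let _ := G.halfEdgeOrder
  constructor
  · refine WellFounded.wellFounded_iff_has_min.2 fun s ⟨h, hs⟩ => ?_
    obtain ⟨m, hm⟩ := ((hG (G.z h)).inter_of_left s).exists_minimal ⟨h, rfl, hs⟩
    exact ⟨m, hm.prop.2, fun k hk hlt =>
      hm.not_lt ⟨(z_eq_of_le hlt.1).trans hm.prop.1, hk⟩ hlt⟩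
  · refine WellFounded.wellFounded_iff_has_min.2 fun s ⟨h, hs⟩ => ?_
    obtain ⟨m, hm⟩ := ((hG (G.z h)).inter_of_left s).exists_maximal ⟨h, rfl, hs⟩
    exact ⟨m, hm.prop.2, fun k hk hlt =>
      hm.not_gt ⟨(z_eq_of_le hlt.1).symm.trans hm.prop.1, hk⟩ hlt⟩

section LocallyFinite

variable [G.LocallyFinite]

theorem exists_le_cov {h k : H} (hlt : G.lt h k) : ∃ m, G.le h m ∧ G.Cov m k := by
  let _ := G.halfEdgeOrder
  have := IsStronglyCoatomic.of_wellFounded_gt (α := H) LocallyFinite.wf_gt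
  obtain ⟨m, hm, hcov⟩ := exists_le_covBy_of_lt (show h < k from hlt)
  exact ⟨m, hm, hcov.1, fun _ => @hcov.2 _⟩

theorem exists_cov_le {h k : H} (hlt : G.lt h k) : ∃ m, G.Cov h m ∧ G.le m k := by
  let _ := G.halfEdgeOrder
  have := IsStronglyAtomic.of_wellFounded_lt (α := H) LocallyFinite.wf_lt
  obtain ⟨m, hcov, hm⟩ := exists_covBy_le_of_lt (show h < k from hlt)
  exact ⟨m, ⟨hcov.1, fun _ => @hcov.2 _⟩, hm⟩

theorem isBot_iff_forall_not_cov {h : H} : G.IsBot h ↔ ∀ k, ¬ G.Cov k h := by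
  refine ⟨fun hh k hk => hk.1.2 (G.le_antisymm hk.1.1 (hh k hk.z_eq)), fun hh k hz => ?_⟩
  rcases (G.comp_iff h k).2 hz.symm with hle | hle
  · exact hle
  · by_contra hnle
    obtain ⟨m, -, hm⟩ := exists_le_cov (G := G) ⟨hle, fun e => hnle (e ▸ G.le_refl k)⟩
    exact hh m hm

theorem isTop_iff_forall_not_cov {h : H} : G.IsTop h ↔ ∀ k, ¬ G.Cov h k := by
  refine ⟨fun hh k hk => hk.1.2 (G.le_antisymm hk.1.1 (hh k hk.z_eq.symm)), fun hh k hz => ?_⟩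
  rcases (G.comp_iff k h).2 hz with hle | hle
  · exact hle
  · by_contra hnle
    obtain ⟨m, hm, -⟩ := exists_cov_le (G := G) ⟨hle, fun e => hnle (e ▸ G.le_refl k)⟩
    exact hh m hm

theorem exists_isBot (v : V) : ∃ h, G.z h = v ∧ G.IsBot h := by
  obtain ⟨h, hh, hmin⟩ := (LocallyFinite.wf_lt (G := G)).has_min (G.z ⁻¹' {v}) (G.z_surj v)
  exact ⟨h, hh, isBot_iff_forall_not_cov.2 fun k hk => hmin k (hk.z_eq.trans hh) hk.1⟩

theorem exists_isTop (v : V) : ∃ h, G.z h = v ∧ G.IsTop h := by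
  obtain ⟨h, hh, hmax⟩ := (LocallyFinite.wf_gt (G := G)).has_min (G.z ⁻¹' {v}) (G.z_surj v)
  exact ⟨h, hh, isTop_iff_forall_not_cov.2 fun k hk => hmax k (hk.z_eq.symm.trans hh) hk.1⟩

end LocallyFinite

theorem edge_eq_edge_iff {h h' : H} : G.edge h = G.edge h' ↔ h = h' ∨ h = G.invh h' := by
  refine ⟨fun he => ?_, ?_⟩
  · induction Quot.eqvGen_exact he with
    | rel a b hι => exact Or.inr (by rw [hι, G.inv_inv])
    | refl => exact Or.inl rfl
    | symm a b _ ih =>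
      rcases ih he.symm with rfl | rfl <;> simp only [G.inv_inv, true_or, or_true]
    | trans a b c hab hbc ih₁ ih₂ =>
      rcases ih₁ (Quot.eqvGen_sound hab) with rfl | rfl <;>
        rcases ih₂ (Quot.eqvGen_sound hbc) with rfl | rfl <;>
        simp only [G.inv_inv, true_or, or_true]
  · rintro (rfl | rfl)
    · rfl
    · exact (Quot.sound (r := fun a b => b = G.invh a) rfl).symm

end Order

end MRG

/-! ### Functoriality of `∇` and uniqueness of `△` -/

theorem BQIso.trans {V A V' A' V'' A'' : Type} {Q : BQuiv V A} {Q' : BQuiv V' A'}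
    {Q'' : BQuiv V'' A''} (h : BQIso Q Q') (h' : BQIso Q' Q'') : BQIso Q Q'' := by
  obtain ⟨eV, eA, hsrc, htgt, hrel⟩ := h
  obtain ⟨eV', eA', hsrc', htgt', hrel'⟩ := h'
  exact ⟨eV.trans eV', eA.trans eA', fun a => (hsrc' _).trans (congrArg eV' (hsrc a)),
    fun a => (htgt' _).trans (congrArg eV' (htgt a)), fun a b => (hrel' _ _).trans (hrel a b)⟩

theorem MRGIso.nabla {V H V' H' : Type} {G : MRG V H} {G' : MRG V' H'} (h : MRGIso G G') :
    BQIso G.nabla G'.nabla := by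
  obtain ⟨-, eH, -, hinv, hle⟩ := h
  have lt_iff : ∀ a b, G.lt a b ↔ G'.lt (eH a) (eH b) := fun a b =>
    and_congr (hle a b).symm eH.injective.ne_iff.symm
  have cov_iff : ∀ a b, G.Cov a b ↔ G'.Cov (eH a) (eH b) := fun a b =>
    and_congr (lt_iff a b) <| eH.forall_congr fun c => by
      rw [lt_iff, lt_iff]
  refine ⟨Quot.congr eH fun a b => by rw [hinv, eH.injective.eq_iff],
    (eH.prodCongr eH).subtypeEquiv fun p => cov_iff p.2 p.1, fun _ => rfl, fun _ => rfl,
    fun a b => ?_⟩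
  change eH b.1.1 = G'.invh (eH a.1.2) ↔ _
  rw [hinv, eH.injective.eq_iff]
  rfl

/-- The marked ribbon graph structure carried over from `G` along bijections of the sets of
vertices and half-edges. -/
def MRG.transport {V H V' H' : Type} (G : MRG V H) (fV : V' ≃ V) (fH : H' ≃ H) : MRG V' H' where
  z h := fV.symm (G.z (fH h))
  invh h := fH.symm (G.invh (fH h))
  inv_inv h := by simp only [Equiv.apply_symm_apply, G.inv_inv, Equiv.symm_apply_apply]
  inv_ne h e := G.inv_ne _ (fH.symm_apply_eq.1 e)
  z_surj := fV.symm.surjective.comp (G.z_surj.comp fH.surjective)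
  le h k := G.le (fH h) (fH k)
  le_refl h := G.le_refl _
  le_trans := G.le_trans
  le_antisymm h h' := fH.injective (G.le_antisymm h h')
  comp_iff h k := by rw [G.comp_iff, fV.symm.injective.eq_iff]
  connected u v := by
    rw [← fV.symm_apply_apply u, ← fV.symm_apply_apply v]
    refine (G.connected (fV u) (fV v)).lift fV.symm ?_
    rintro _ _ ⟨h, rfl, rfl⟩
    exact ⟨fH.symm h, by simp only [Equiv.apply_symm_apply, and_self]⟩
  thick := by
    obtain ⟨h, h', hne, hz⟩ := G.thick
    exact ⟨fH.symm h, fH.symm h', fH.symm.injective.ne hne, by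
      simp only [Equiv.apply_symm_apply, hz]⟩

namespace IsDeltaOf

variable {V A V' H' V'' H'' : Type} {Q : BQuiv V A} {G' : MRG V' H'} {G'' : MRG V'' H''}

theorem exists_on_threads (h : IsDeltaOf Q G') :
    ∃ G : MRG (PThread Q) (PSplit Q), IsDeltaOf Q G := by
  obtain ⟨fV, fH, hz, hinv, hle⟩ := h
  refine ⟨G'.transport fV fH, Equiv.refl _, Equiv.refl _, fun x => ?_, fun x y hne hc => ?_, hle⟩
  · exact fV.symm_apply_eq.2 (hz x)
  · exact fH.symm_apply_eq.2 (hinv x y hne hc)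

theorem mrgIso (h' : IsDeltaOf Q G') (h'' : IsDeltaOf Q G'')
    (partner : ∀ x : PSplit Q, ∃ y, x ≠ y ∧ x.center = y.center) : MRGIso G' G'' := by
  obtain ⟨fV', fH', hz', hinv', hle'⟩ := h'
  obtain ⟨fV'', fH'', hz'', hinv'', hle''⟩ := h''
  refine ⟨fV'.symm.trans fV'', fH'.symm.trans fH'', ?_, ?_, ?_⟩ <;>
    simp only [fH'.surjective.forall, Equiv.trans_apply,
      Equiv.symm_apply_apply]
  · exact fun x => by rw [hz'', hz', Equiv.symm_apply_apply]
  · intro x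
    obtain ⟨y, hne, hc⟩ := partner x
    rw [hinv'' x y hne hc, hinv' x y hne hc, Equiv.symm_apply_apply]
  · exact fun x y => (hle'' x y).trans (hle' x y).symm

end IsDeltaOf

/-! ### Realizations -/

namespace BQuiv

variable {V A : Type} {Q : BQuiv V A}

variable (Q) in
/-- `ab` is a permitted path of length two. -/
def Permits (a b : A) : Prop := Q.src a = Q.tgt b ∧ ¬ Q.rel a b

theorem Path.permitted_iff_isChain_permits (p : Path Q) :
    p.Permitted ↔ p.arrows.IsChain Q.Permits := by
  have hchain := List.isChain_iff_getElem.1 p.chain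
  refine List.isChain_iff_getElem.trans (Iff.trans ?_ List.isChain_iff_getElem.symm)
  exact forall₂_congr fun i hi => (and_iff_right (hchain i hi)).symm

theorem Path.ext_base_arrows {p q : Path Q} (hbase : p.base = q.base)
    (harrows : p.arrows = q.arrows) : p = q := by
  cases p
  cases q
  cases hbase
  cases harrows
  rfl

end BQuiv

theorem card_preimage_pair_of_injective {α β : Type*} {f : α → β} (hf : f.Injective) {x y : β}
    (hxy : x ≠ y) : Nat.card {a // f a = x ∨ f a = y} =
      (if x ∈ Set.range f then 1 else 0) + (if y ∈ Set.range f then 1 else 0) := by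
  have hcard : Nat.card {a // f a = x ∨ f a = y} = ({x, y} ∩ Set.range f).ncard := by
    rw [← Set.ncard_preimage_of_injective_subset_range hf Set.inter_subset_right,
      Set.preimage_inter_range]
    rfl
  rw [hcard]
  split_ifs with hx hy hy <;>
    simp [Set.insert_inter_of_mem, Set.insert_inter_of_notMem, Set.singleton_inter_of_mem,
      Set.singleton_inter_of_notMem, hx, hy, Set.ncard_pair hxy]

/-- An identification of the bound quiver `Q` with `∇ G`, phrased on half-edges: `edgeOf` sends a
half-edge to the vertex of `Q` given by its edge, and the arrow `a` corresponds to the covering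
pair formed by `lo a` and its direct successor `hi a`. -/
structure Realization {V A W H : Type} (Q : BQuiv V A) (G : MRG W H) where
  edgeOf : H → V
  lo : A → H
  hi : A → H
  edgeOf_surjective : Function.Surjective edgeOf
  edgeOf_eq_iff : ∀ {h h'}, edgeOf h = edgeOf h' ↔ h = h' ∨ h = G.invh h'
  cov : ∀ a, G.Cov (lo a) (hi a)
  lo_injective : Function.Injective lo
  exists_arrow : ∀ {h h'}, G.Cov h h' → ∃ a, lo a = h ∧ hi a = h'
  src_eq : ∀ a, Q.src a = edgeOf (lo a)
  tgt_eq : ∀ a, Q.tgt a = edgeOf (hi a)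
  rel_iff : ∀ {a b}, Q.rel a b ↔ hi b = G.invh (lo a)

namespace Realization

/-- The tautological realization of `∇ G` by `G`. -/
def ofNabla {W H : Type} (G : MRG W H) : Realization G.nabla G where
  edgeOf := G.edge
  lo a := a.1.2
  hi a := a.1.1
  edgeOf_surjective := Quot.exists_rep
  edgeOf_eq_iff := edge_eq_edge_iff
  cov a := a.2
  lo_injective a b hab := by
    obtain ⟨⟨h, k⟩, ha⟩ := a
    obtain ⟨⟨h', k'⟩, hb⟩ := b
    obtain rfl : k = k' := hab
    obtain rfl := ha.eq_of_left hb
    rfl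
  exists_arrow hcov := ⟨⟨(_, _), hcov⟩, rfl, rfl⟩
  src_eq _ := rfl
  tgt_eq _ := rfl
  rel_iff := Iff.rfl

variable {V A W H : Type} {Q : BQuiv V A} {G : MRG W H} (R : Realization Q G)

include R in
theorem bqIso : BQIso Q G.nabla := by
  let vertexMap : G.E → V :=
    Quot.lift R.edgeOf fun _ _ hι => (R.edgeOf_eq_iff.2 (Or.inr hι)).symm
  let arrowMap : A → G.NArrow := fun a => ⟨(R.hi a, R.lo a), R.cov a⟩
  have vertexMap_bijective : vertexMap.Bijective := by
    refine ⟨?_, Function.Surjective.of_comp (g := G.edge) R.edgeOf_surjective⟩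
    rintro ⟨h⟩ ⟨h'⟩ heq
    exact edge_eq_edge_iff.2 (R.edgeOf_eq_iff.1 heq)
  have arrowMap_bijective : arrowMap.Bijective := by
    refine ⟨fun a b hab => R.lo_injective (congrArg (fun x => x.1.2) hab), ?_⟩
    rintro ⟨⟨h', h⟩, hcov⟩
    obtain ⟨a, rfl, rfl⟩ := R.exists_arrow hcov
    exact ⟨a, rfl⟩
  refine ⟨(Equiv.ofBijective vertexMap vertexMap_bijective).symm,
    Equiv.ofBijective arrowMap arrowMap_bijective, fun a => ?_, fun a => ?_,
    fun a b => R.rel_iff.symm⟩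
  · exact (Equiv.eq_symm_apply _).2 (R.src_eq a).symm
  · exact (Equiv.eq_symm_apply _).2 (R.tgt_eq a).symm

theorem edgeOf_invh (h : H) : R.edgeOf (G.invh h) = R.edgeOf h :=
  R.edgeOf_eq_iff.2 (Or.inr rfl)

theorem hi_injective : Function.Injective R.hi := fun a b hab =>
  R.lo_injective ((R.cov a).eq_of_right (hab ▸ R.cov b))

theorem permits_iff {a b : A} : Q.Permits a b ↔ R.lo a = R.hi b := by
  unfold Permits
  rw [R.src_eq, R.tgt_eq, R.edgeOf_eq_iff, R.rel_iff]
  constructor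
  · rintro ⟨h | h, hrel⟩
    · exact h
    · exact absurd (by rw [h, G.inv_inv]) hrel
  · exact fun h => ⟨Or.inl h, fun hrel => G.inv_ne (R.lo a) (hrel.symm.trans h.symm)⟩

theorem exists_edgeOf_eq_and_iff {P : H → Prop} (h₀ : H) :
    (∃ h, R.edgeOf h = R.edgeOf h₀ ∧ P h) ↔ P h₀ ∨ P (G.invh h₀) := by
  simp only [R.edgeOf_eq_iff, or_and_right, exists_or, exists_eq_left]

section Ends

variable [G.LocallyFinite]

theorem isBot_iff {h : H} : G.IsBot h ↔ h ∉ Set.range R.hi := by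
  rw [isBot_iff_forall_not_cov]
  refine ⟨?_, fun hh k hk => ?_⟩
  · rintro hh ⟨a, rfl⟩
    exact hh _ (R.cov a)
  · obtain ⟨a, -, rfl⟩ := R.exists_arrow hk
    exact hh ⟨a, rfl⟩

theorem isTop_iff {h : H} : G.IsTop h ↔ h ∉ Set.range R.lo := by
  rw [isTop_iff_forall_not_cov]
  refine ⟨?_, fun hh k hk => ?_⟩
  · rintro hh ⟨a, rfl⟩
    exact hh _ (R.cov a)
  · obtain ⟨a, rfl, -⟩ := R.exists_arrow hk
    exact hh ⟨a, rfl⟩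

theorem isTop_hi_iff {b : A} : G.IsTop (R.hi b) ↔ ∀ a, Q.src a = Q.tgt b → Q.rel a b := by
  rw [R.isTop_iff, Set.mem_range, not_exists]
  refine forall_congr' fun a => ?_
  rw [← R.permits_iff, Permits, not_and_not_right]

theorem isBot_lo_iff {a : A} : G.IsBot (R.lo a) ↔ ∀ b, Q.src a = Q.tgt b → Q.rel a b := by
  rw [R.isBot_iff, Set.mem_range, not_exists]
  refine forall_congr' fun b => ?_
  rw [eq_comm, ← R.permits_iff, Permits, not_and_not_right]

theorem deg_edgeOf (h : H) : Q.deg (R.edgeOf h) =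
    ((if G.IsTop h then 0 else 1) + (if G.IsTop (G.invh h) then 0 else 1)) +
      ((if G.IsBot h then 0 else 1) + (if G.IsBot (G.invh h) then 0 else 1)) := by
  have hne := (G.inv_ne h).symm
  simp only [deg, R.src_eq, R.tgt_eq, R.edgeOf_eq_iff,
    card_preimage_pair_of_injective R.lo_injective hne,
    card_preimage_pair_of_injective R.hi_injective hne, R.isTop_iff, R.isBot_iff, ite_not]

theorem exists_permits_at_iff {v : V} :
    (∃ a b, Q.src a = v ∧ Q.tgt b = v ∧ ¬ Q.rel a b) ↔
      ∃ h, R.edgeOf h = v ∧ ¬ G.IsTop h ∧ ¬ G.IsBot h := by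
  simp only [R.isTop_iff, R.isBot_iff, not_not]
  constructor
  · rintro ⟨a, b, rfl, hb, hrel⟩
    exact ⟨R.lo a, (R.src_eq a).symm, ⟨a, rfl⟩, b, (R.permits_iff.1 ⟨hb.symm, hrel⟩).symm⟩
  · rintro ⟨_, rfl, ⟨a, rfl⟩, b, hb⟩
    obtain ⟨hcomp, hrel⟩ := R.permits_iff.2 hb.symm
    exact ⟨a, b, R.src_eq a, hcomp.symm.trans (R.src_eq a), hrel⟩

theorem trivial_thread_iff {v : V} :
    (Q.deg v = 1 ∨ (Q.deg v = 2 ∧ ∃ a b, Q.src a = v ∧ Q.tgt b = v ∧ ¬ Q.rel a b)) ↔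
      ∃ h, R.edgeOf h = v ∧ G.IsIsolated h := by
  obtain ⟨h, rfl⟩ := R.edgeOf_surjective v
  rw [R.exists_permits_at_iff, R.exists_edgeOf_eq_and_iff, R.exists_edgeOf_eq_and_iff,
    R.deg_edgeOf]
  have hnot := IsIsolated.not_invh (G := G) (h := h)
  unfold IsIsolated at hnot ⊢
  by_cases hT : G.IsTop h <;> by_cases hB : G.IsBot h <;> by_cases hT' : G.IsTop (G.invh h) <;>
    by_cases hB' : G.IsBot (G.invh h) <;> simp_all

end Ends

end Realization

/-! ### Permitted threads of a realization -/

namespace Realization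

variable {V A W H : Type} {Q : BQuiv V A} {G : MRG W H} {R : Realization Q G}

variable (R) in
/-- `R.Run t l b`: the arrows `l`, read from left to right, lead from the half-edge `t` down to
`b` by successive covering pairs. -/
def Run : H → List A → H → Prop
  | t, [], b => t = b
  | t, a :: l, b => R.hi a = t ∧ Run (R.lo a) l b

/-- The half-edge reached after the first `n` arrows of a run along `l` ending at `b`. -/
def halfEdgeAt (R : Realization Q G) (l : List A) (b : H) (n : ℕ) : H :=
  (l.drop n).head?.elim b R.hi

theorem run_cons_iff {t b : H} {a : A} {l : List A} :
    R.Run t (a :: l) b ↔ R.hi a = t ∧ (a :: l).IsChain (fun x y => R.lo x = R.hi y) ∧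
      R.lo ((a :: l).getLast (List.cons_ne_nil a l)) = b := by
  refine and_congr_right fun ht => ?_
  clear ht
  induction l generalizing a with
  | nil => simp only [Run, List.isChain_singleton, List.getLast_singleton, true_and]
  | cons a' l ih =>
    rw [List.isChain_cons_cons, List.getLast_cons (List.cons_ne_nil a' l), and_assoc, ← ih]
    exact and_congr_left' eq_comm

namespace Run

variable {t m b : H} {l l' : List A}

theorem le (hl : R.Run t l b) : G.le b t := by
  induction l generalizing t with
  | nil => exact hl ▸ G.le_refl _
  | cons a l ih =>
    obtain ⟨rfl, hl⟩ := hl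
    exact G.le_trans (ih hl) (R.cov a).1.1

theorem lt_of_cons {a : A} (hl : R.Run t (a :: l) b) : G.lt b t := by
  obtain ⟨rfl, hl⟩ := hl
  exact MRG.lt_of_le_of_lt hl.le (R.cov a).1

theorem append (hl : R.Run t l m) (hl' : R.Run m l' b) : R.Run t (l ++ l') b := by
  induction l generalizing t with
  | nil => exact hl ▸ hl'
  | cons a l ih => exact ⟨hl.1, ih hl.2⟩

theorem arrows_unique (hl : R.Run t l b) (hl' : R.Run t l' b) : l = l' := by
  induction l generalizing l' t with
  | nil =>
    cases l' with
    | nil => rfl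
    | cons a' l' => exact absurd hl.symm hl'.lt_of_cons.2
  | cons a l ih =>
    cases l' with
    | nil => exact absurd hl'.symm hl.lt_of_cons.2
    | cons a' l' =>
      obtain rfl := R.hi_injective (hl.1.trans hl'.1.symm)
      rw [ih hl.2 hl'.2]

theorem halfEdgeAt_zero (hl : R.Run t l b) : R.halfEdgeAt l b 0 = t := by
  cases l with
  | nil => exact hl.symm
  | cons a l => exact hl.1

theorem halfEdgeAt_append (l : List A) (hl' : R.Run m l' b) :
    R.halfEdgeAt (l ++ l') b l.length = m := by
  simpa only [halfEdgeAt, List.drop_left, List.drop_zero] using hl'.halfEdgeAt_zero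

theorem drop (hl : R.Run t l b) (n : ℕ) : R.Run (R.halfEdgeAt l b n) (l.drop n) b := by
  induction l generalizing t n with
  | nil => simp only [halfEdgeAt, List.drop_nil, List.head?_nil, Option.elim_none, Run]
  | cons a l ih =>
    cases n with
    | zero => exact ⟨rfl, hl.2⟩
    | succ n => exact ih hl.2 n

theorem halfEdgeAt_lt (hl : R.Run t l b) {i j : ℕ} (hij : i < j) (hj : j ≤ l.length) :
    G.lt (R.halfEdgeAt l b j) (R.halfEdgeAt l b i) := by
  induction l generalizing t i j with
  | nil => exact absurd hj (by rw [List.length_nil]; omega)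
  | cons a l ih =>
    obtain ⟨rfl, hl⟩ := hl
    cases j with
    | zero => exact absurd hij (Nat.not_lt_zero i)
    | succ j =>
      have hj : j ≤ l.length := Nat.succ_le_succ_iff.1 hj
      cases i with
      | zero =>
        refine MRG.lt_of_le_of_lt ?_ (R.cov a).1
        rw [← hl.halfEdgeAt_zero]
        rcases j.eq_zero_or_pos with rfl | hpos
        · exact G.le_refl _
        · exact (ih hl hpos hj).1
      | succ i => exact ih hl (Nat.succ_lt_succ_iff.1 hij) hj

/-- The path of `Q` formed by the arrows of a run. -/
def path (hl : R.Run t l b) : Path Q where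
  base := R.edgeOf b
  arrows := l
  chain := by
    cases l with
    | nil => exact List.isChain_nil
    | cons a l => exact (run_cons_iff.1 hl).2.1.imp fun _ _ h => (R.permits_iff.2 h).1
  base_eq a ha := by
    cases l with
    | nil => cases ha
    | cons a' l =>
      rw [List.getLast?_eq_some_getLast (List.cons_ne_nil a' l), Option.some.injEq] at ha
      rw [R.src_eq, ← ha, (run_cons_iff.1 hl).2.2]

end Run

theorem exists_run (R : Realization Q G) [G.LocallyFinite] {b t : H} (hle : G.le b t) :
    ∃ l, R.Run t l b := by
  induction t using (LocallyFinite.wf_lt (G := G)).induction with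
  | _ t ih =>
    rcases eq_or_ne b t with rfl | hne
    · exact ⟨[], rfl⟩
    · obtain ⟨c, hbc, hc⟩ := exists_le_cov ⟨hle, hne⟩
      obtain ⟨l, hl⟩ := ih c hc.1 hbc
      obtain ⟨a, rfl, rfl⟩ := R.exists_arrow hc
      exact ⟨a :: l, rfl, hl⟩

variable (R) in
/-- The path `p` runs through all half-edges of a vertex of `G`, from the greatest one `t` to the
least one `b`. For a trivial path `p` the vertex is a leaf, and the condition on the base point
makes `b` a half-edge of the edge `p.base`. -/
structure Spans (p : Path Q) (t b : H) : Prop where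
  run : R.Run t p.arrows b
  edgeOf_bot : R.edgeOf b = p.base
  isTop : G.IsTop t
  isBot : G.IsBot b

theorem Run.spans_path {t b : H} {l : List A} (hl : R.Run t l b) (ht : G.IsTop t)
    (hb : G.IsBot b) : R.Spans hl.path t b :=
  ⟨hl, rfl, ht, hb⟩

section Threads

variable [G.LocallyFinite]

theorem isPermThread_iff_of_arrows_eq_nil (R : Realization Q G) {p : Path Q}
    (hp : p.arrows = []) : IsPermThread Q p ↔ ∃ t b, R.Spans p t b := by
  simp only [IsPermThread, hp, ne_eq, not_true_eq_false, false_and, true_and, false_or,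
    R.trivial_thread_iff]
  constructor
  · rintro ⟨h, hbase, hbot, htop⟩
    exact ⟨h, h, hp ▸ rfl, hbase, htop, hbot⟩
  · rintro ⟨t, b, hrun, hbase, htop, hbot⟩
    rw [hp] at hrun
    obtain rfl : t = b := hrun
    exact ⟨t, hbase, hbot, htop⟩

theorem isPermThread_iff_of_arrows_eq_cons (R : Realization Q G) {p : Path Q} {a : A}
    {l : List A} (hp : p.arrows = a :: l) : IsPermThread Q p ↔ ∃ t b, R.Spans p t b := by
  have hlast := List.getLast?_eq_some_getLast (List.cons_ne_nil a l)
  have hperm : p.Permitted ↔ (a :: l).IsChain (fun x y => R.lo x = R.hi y) := by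
    simp only [p.permitted_iff_isChain_permits, hp, ← R.permits_iff]
  have hthread : IsPermThread Q p ↔ p.Permitted ∧ G.IsTop (R.hi a) ∧
      G.IsBot (R.lo ((a :: l).getLast (List.cons_ne_nil a l))) := by
    simp only [IsPermThread, hp, hlast, ne_eq, reduceCtorEq, not_false_eq_true, true_and,
      false_and, or_false, List.head?_cons, Option.some.injEq, R.isTop_hi_iff, R.isBot_lo_iff]
    exact and_congr_right' (and_congr (forall_congr' fun _ => forall_eq')
      (forall_comm.trans (forall_congr' fun _ => forall_eq')))
  rw [hthread, hperm]
  constructor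
  · rintro ⟨hchain, htop, hbot⟩
    refine ⟨_, _, ?_, ?_, htop, hbot⟩
    · rw [hp]
      exact run_cons_iff.2 ⟨rfl, hchain, rfl⟩
    · rw [← R.src_eq, p.base_eq _ (by rw [hp, hlast])]
  · rintro ⟨t, b, hrun, -, htop, hbot⟩
    rw [hp] at hrun
    obtain ⟨rfl, hchain, rfl⟩ := run_cons_iff.1 hrun
    exact ⟨hchain, htop, hbot⟩

theorem isPermThread_iff_exists_spans (R : Realization Q G) {p : Path Q} :
    IsPermThread Q p ↔ ∃ t b, R.Spans p t b := by
  cases hp : p.arrows with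
  | nil => exact R.isPermThread_iff_of_arrows_eq_nil hp
  | cons a l => exact R.isPermThread_iff_of_arrows_eq_cons hp

end Threads

namespace Spans

variable {p q : Path Q} {t b t' b' : H}

theorem bot_unique (hp : R.Spans p t b) (hp' : R.Spans p t' b') : b = b' := by
  obtain ⟨hrun, hbase, htop, hbot⟩ := hp
  obtain ⟨hrun', hbase', htop', hbot'⟩ := hp'
  cases harrows : p.arrows with
  | nil =>
    rw [harrows] at hrun hrun'
    obtain rfl : t = b := hrun
    obtain rfl : t' = b' := hrun'
    rcases R.edgeOf_eq_iff.1 (hbase.trans hbase'.symm) with heq | rfl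
    · exact heq
    · exact absurd ⟨hbot, htop⟩ (IsIsolated.not_invh ⟨hbot', htop'⟩)
  | cons a l =>
    rw [harrows] at hrun hrun'
    exact (run_cons_iff.1 hrun).2.2.symm.trans (run_cons_iff.1 hrun').2.2

theorem path_unique (hp : R.Spans p t b) (hq : R.Spans q t' b') (hz : G.z b = G.z b') :
    p = q := by
  obtain rfl := hp.isBot.eq hq.isBot hz
  obtain rfl := hp.isTop.eq hq.isTop
    ((z_eq_of_le hp.run.le).symm.trans (z_eq_of_le hq.run.le))
  exact Path.ext_base_arrows (hp.edgeOf_bot.symm.trans hq.edgeOf_bot)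
    (hp.run.arrows_unique hq.run)

end Spans

theorem exists_spans_through (R : Realization Q G) [G.LocallyFinite] (h : H) :
    ∃ (p : Path Q) (t b : H), R.Spans p t b ∧
      ∃ n ≤ p.arrows.length, R.halfEdgeAt p.arrows b n = h := by
  obtain ⟨t, ht, htop⟩ := G.exists_isTop (G.z h)
  obtain ⟨b, hb, hbot⟩ := G.exists_isBot (G.z h)
  obtain ⟨l, hl⟩ := R.exists_run (htop h ht.symm)
  obtain ⟨l', hl'⟩ := R.exists_run (hbot h hb.symm)
  exact ⟨(hl.append hl').path, t, b, (hl.append hl').spans_path htop hbot, l.length,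
    List.length_append ▸ Nat.le_add_right .., hl'.halfEdgeAt_append l⟩

end Realization

/-! ### `△ Q` from a realization -/

namespace Realization

variable {V A W H : Type} {Q : BQuiv V A} {G : MRG W H} (R : Realization Q G) [G.LocallyFinite]

theorem exists_bot (p : PThread Q) : ∃ b t, R.Spans p.1 t b := by
  obtain ⟨t, b, hp⟩ := R.isPermThread_iff_exists_spans.1 p.2
  exact ⟨b, t, hp⟩

/-- The least half-edge of the vertex of `G` corresponding to a permitted thread. -/
noncomputable def bot (p : PThread Q) : H := (R.exists_bot p).choose

theorem exists_spans_bot (p : PThread Q) : ∃ t, R.Spans p.1 t (R.bot p) :=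
  (R.exists_bot p).choose_spec

/-- The vertex of `G` corresponding to a permitted thread. -/
noncomputable def vertexOf (p : PThread Q) : W := G.z (R.bot p)

/-- The half-edge of `G` corresponding to a split permitted thread. -/
noncomputable def halfEdgeOf (x : PSplit Q) : H :=
  R.halfEdgeAt x.thread.1.arrows (R.bot x.thread) x.idx

theorem z_halfEdgeOf (x : PSplit Q) : G.z (R.halfEdgeOf x) = R.vertexOf x.thread := by
  obtain ⟨t, hp⟩ := R.exists_spans_bot x.thread
  exact (z_eq_of_le (hp.run.drop x.idx).le).symm

theorem edgeOf_halfEdgeOf (x : PSplit Q) : R.edgeOf (R.halfEdgeOf x) = x.center := by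
  obtain ⟨t, hp⟩ := R.exists_spans_bot x.thread
  change R.edgeOf ((x.thread.1.arrows.drop x.idx).head?.elim (R.bot x.thread) R.hi) =
    (x.thread.1.arrows.drop x.idx).head?.elim x.thread.1.base Q.tgt
  cases (x.thread.1.arrows.drop x.idx).head? with
  | none => exact hp.edgeOf_bot
  | some a => exact (R.tgt_eq a).symm

theorem vertexOf_injective : Function.Injective R.vertexOf := by
  intro p q hpq
  obtain ⟨t, hp⟩ := R.exists_spans_bot p
  obtain ⟨t', hq⟩ := R.exists_spans_bot q
  exact Subtype.ext (hp.path_unique hq hpq)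

theorem halfEdgeOf_surjective : Function.Surjective R.halfEdgeOf := by
  intro h
  obtain ⟨p, t, b, hp, n, hn, rfl⟩ := R.exists_spans_through h
  let p' : PThread Q := ⟨p, R.isPermThread_iff_exists_spans.2 ⟨t, b, hp⟩⟩
  obtain ⟨t', hp'⟩ := R.exists_spans_bot p'
  exact ⟨⟨(p', n), hn⟩, congrArg (R.halfEdgeAt p.arrows · n) (hp'.bot_unique hp)⟩

theorem vertexOf_bijective : Function.Bijective R.vertexOf := by
  refine ⟨R.vertexOf_injective, fun w => ?_⟩
  obtain ⟨h, rfl⟩ := G.z_surj w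
  obtain ⟨x, rfl⟩ := R.halfEdgeOf_surjective h
  exact ⟨x.thread, (R.z_halfEdgeOf x).symm⟩

theorem halfEdgeOf_le_iff {x y : PSplit Q} :
    G.le (R.halfEdgeOf x) (R.halfEdgeOf y) ↔ x.thread = y.thread ∧ y.idx ≤ x.idx := by
  obtain ⟨⟨p, n⟩, hn⟩ := x
  obtain ⟨⟨q, m⟩, hm⟩ := y
  obtain ⟨t, hp⟩ := R.exists_spans_bot p
  constructor
  · intro hle
    obtain rfl : p = q := R.vertexOf_injective <|
      (R.z_halfEdgeOf _).symm.trans ((z_eq_of_le hle).trans (R.z_halfEdgeOf _))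
    refine ⟨rfl, not_lt.1 fun hlt => ?_⟩
    exact (MRG.lt_of_le_of_lt hle (hp.run.halfEdgeAt_lt hlt hm)).2 rfl
  · rintro ⟨heq, hidx⟩
    obtain rfl : p = q := heq
    rcases hidx.eq_or_lt with heq | hlt
    · obtain rfl : m = n := heq
      exact G.le_refl _
    · exact (hp.run.halfEdgeAt_lt hlt hn).1

theorem halfEdgeOf_bijective : Function.Bijective R.halfEdgeOf := by
  refine ⟨fun x y hxy => ?_, R.halfEdgeOf_surjective⟩
  have hle : G.le (R.halfEdgeOf x) (R.halfEdgeOf y) := by rw [hxy]; exact G.le_refl _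
  have hge : G.le (R.halfEdgeOf y) (R.halfEdgeOf x) := by rw [hxy]; exact G.le_refl _
  obtain ⟨hthread, hidx⟩ := R.halfEdgeOf_le_iff.1 hle
  obtain ⟨-, hidx'⟩ := R.halfEdgeOf_le_iff.1 hge
  exact Subtype.ext (Prod.ext hthread (hidx'.antisymm hidx))

include R in
theorem isDeltaOf : IsDeltaOf Q G := by
  refine ⟨Equiv.ofBijective _ R.vertexOf_bijective, Equiv.ofBijective _ R.halfEdgeOf_bijective,
    R.z_halfEdgeOf, fun x y hne hcenter => ?_, fun x y => R.halfEdgeOf_le_iff⟩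
  rw [← R.edgeOf_halfEdgeOf, ← R.edgeOf_halfEdgeOf, eq_comm, R.edgeOf_eq_iff] at hcenter
  exact (hcenter.resolve_left fun heq => hne (R.halfEdgeOf_bijective.1 heq.symm)).symm

include R in
theorem exists_ne_center_eq (x : PSplit Q) : ∃ y, x ≠ y ∧ x.center = y.center := by
  obtain ⟨y, hy⟩ := R.halfEdgeOf_surjective (G.invh (R.halfEdgeOf x))
  refine ⟨y, ?_, ?_⟩
  · rintro rfl
    exact G.inv_ne _ hy.symm
  · rw [← R.edgeOf_halfEdgeOf, ← R.edgeOf_halfEdgeOf, hy, R.edgeOf_invh]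

include R in
theorem mrgIso {W' H' : Type} {G' : MRG W' H'} (hG' : IsDeltaOf Q G') : MRGIso G G' :=
  R.isDeltaOf.mrgIso hG' R.exists_ne_center_eq

end Realization

/-! ### Realizations of gentle bound quivers -/

theorem exists_injective_bool {X : Type*} [Finite X] (hX : Nat.card X ≤ 2) :
    ∃ f : X → Bool, f.Injective := by
  have := Fintype.ofFinite X
  rw [Nat.card_eq_fintype_card, ← Fintype.card_bool] at hX
  obtain ⟨f⟩ := Function.Embedding.nonempty_of_card_le hX
  exact ⟨f, f.injective⟩

theorem exists_injective_bool_iff_ne {X Y : Type*} [Finite X] [Finite Y] (hX : Nat.card X ≤ 2)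
    (hY : Nat.card Y ≤ 2) {r : X → Y → Prop} (hr : Relator.BiUnique r)
    (hr' : Relator.BiUnique fun x y => ¬ r x y) :
    ∃ (f : X → Bool) (g : Y → Bool), f.Injective ∧ g.Injective ∧ ∀ x y, r x y ↔ f x ≠ g y := by
  rcases isEmpty_or_nonempty Y with _ | ⟨⟨y₀⟩⟩
  · obtain ⟨f, hf⟩ := exists_injective_bool hX
    exact ⟨f, isEmptyElim, hf, Function.injective_of_subsingleton _, fun _ => isEmptyElim⟩
  · obtain ⟨g, hg⟩ := exists_injective_bool hY
    refine ⟨fun x => if r x y₀ then !g y₀ else g y₀, g, fun x x' hxx' => ?_, hg, fun x y => ?_⟩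
    · have hiff : r x y₀ ↔ r x' y₀ := by
        by_cases hx : r x y₀ <;> by_cases hx' : r x' y₀ <;> simp_all
      by_cases hx : r x y₀
      · exact hr.1 hx (hiff.1 hx)
      · exact hr'.1 hx (mt hiff.2 hx)
    · rcases eq_or_ne y y₀ with rfl | hy
      · by_cases hx : r x y <;> simp [hx]
      · have hgy : g y = !g y₀ := Bool.eq_not.2 (hg.ne hy)
        by_cases hx : r x y₀
        · simpa [hx, hgy] using fun hxy => hy (hr.2 hxy hx)
        · simpa [hx, hgy] using of_not_not fun hxy => hy (hr'.2 hxy hx)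

section ReflTransGen

open Relation

variable {α : Type*} {r : α → α → Prop}

theorem reflTransGen_antisymm_of_wellFounded (hr : WellFounded r) {x y : α}
    (hxy : ReflTransGen r x y) (hyx : ReflTransGen r y x) : x = y := by
  rcases reflTransGen_iff_eq_or_transGen.1 hxy with rfl | hlt
  · rfl
  · exact absurd (hlt.trans_left hyx) (hr.transGen.irrefl.irrefl x)

/-- Comparability in the order generated by an injective partial function, given by its graph
`r`. -/
def comparableSetoid (hright : Relator.RightUnique r) (hleft : Relator.LeftUnique r) :
    Setoid α where
  r x y := ReflTransGen r x y ∨ ReflTransGen r y x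
  iseqv := by
    refine ⟨fun _ => Or.inl ReflTransGen.refl, Or.symm, ?_⟩
    rintro x y z (hxy | hyx) (hyz | hzy)
    · exact Or.inl (hxy.trans hyz)
    · have hswap := ReflTransGen.total_of_right_unique hleft.flip
        (reflTransGen_swap.2 hxy) (reflTransGen_swap.2 hzy)
      exact hswap.symm.imp reflTransGen_swap.1 reflTransGen_swap.1
    · exact ReflTransGen.total_of_right_unique hright hyx hyz
    · exact Or.inr (hzy.trans hyx)

end ReflTransGen

/-- The other half-edge of the same edge, when the half-edges are the pairs of an edge in `V` and
one of its two sides. -/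
def flipSide {V : Type*} (x : V × Bool) : V × Bool := (x.1, !x.2)

theorem flipSide_flipSide {V : Type*} (x : V × Bool) : flipSide (flipSide x) = x :=
  Prod.ext rfl (Bool.not_not x.2)

theorem flipSide_ne {V : Type*} (x : V × Bool) : flipSide x ≠ x := fun h =>
  Bool.not_ne_self x.2 (congrArg Prod.snd h)

theorem fst_eq_iff_eq_or_eq_flipSide {V : Type*} {x y : V × Bool} :
    x.1 = y.1 ↔ x = y ∨ x = flipSide y := by
  simp only [Prod.ext_iff, flipSide, ← and_or_left, Bool.eq_not, eq_or_ne, and_true]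

namespace BQuiv

variable {V A : Type} {Q : BQuiv V A}

variable (Q) in
/-- A choice of the side on which each arrow leaves its source and enters its target, such that
each side of a vertex carries at most one outgoing and one incoming arrow and the relations are
the paths of length two that change sides. -/
structure Polarization where
  lo : A → V × Bool
  hi : A → V × Bool
  lo_fst : ∀ a, (lo a).1 = Q.src a
  hi_fst : ∀ a, (hi a).1 = Q.tgt a
  lo_injective : lo.Injective
  hi_injective : hi.Injective
  rel_iff : ∀ {a b}, Q.rel a b ↔ hi b = flipSide (lo a)

namespace IsGentle

theorem exists_sides_at (hQ : Q.IsGentle) {v : V} (hsrc : {a | Q.src a = v}.Finite)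
    (htgt : {a | Q.tgt a = v}.Finite) :
    ∃ (σ : {a // Q.src a = v} → Bool) (τ : {a // Q.tgt a = v} → Bool),
      σ.Injective ∧ τ.Injective ∧ ∀ a b, Q.rel a.1 b.1 ↔ σ a ≠ τ b := by
  have : Finite {a // Q.src a = v} := hsrc
  have : Finite {a // Q.tgt a = v} := htgt
  refine exists_injective_bool_iff_ne (hQ.out_le v) (hQ.in_le v) ⟨?_, ?_⟩ ⟨?_, ?_⟩
  · exact fun a a' b h h' => Subtype.ext (hQ.unique_rel_post b a a' h h')
  · exact fun a b b' h h' => Subtype.ext (hQ.unique_rel_pre a b b' h h')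
  · exact fun a a' b h h' => Subtype.ext <|
      hQ.unique_nonrel_post b a a' (a.2.trans b.2.symm) (a'.2.trans b.2.symm) h h'
  · exact fun a b b' h h' => Subtype.ext <|
      hQ.unique_nonrel_pre a b b' (a.2.trans b.2.symm) (a.2.trans b'.2.symm) h h'

theorem nonempty_polarization (hQ : Q.IsGentle) (hsrc : ∀ v, {a | Q.src a = v}.Finite)
    (htgt : ∀ v, {a | Q.tgt a = v}.Finite) : Nonempty Q.Polarization := by
  choose σ τ hσ hτ hrel using fun v => hQ.exists_sides_at (hsrc v) (htgt v)
  have σ_eq : ∀ {a v} (hv : Q.src a = v), σ _ ⟨a, rfl⟩ = σ v ⟨a, hv⟩ := by rintro a _ rfl; rfl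
  have τ_eq : ∀ {b v} (hv : Q.tgt b = v), τ _ ⟨b, rfl⟩ = τ v ⟨b, hv⟩ := by rintro b _ rfl; rfl
  refine ⟨⟨fun a => (Q.src a, σ _ ⟨a, rfl⟩), fun b => (Q.tgt b, τ _ ⟨b, rfl⟩), fun _ => rfl,
    fun _ => rfl, fun a a' h => ?_, fun b b' h => ?_, fun {a b} => ?_⟩⟩
  · obtain ⟨hv, hside⟩ := Prod.ext_iff.1 h
    exact congrArg Subtype.val (hσ _ (hside.trans (σ_eq hv.symm)))
  · obtain ⟨hv, hside⟩ := Prod.ext_iff.1 h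
    exact congrArg Subtype.val (hτ _ (hside.trans (τ_eq hv.symm)))
  · simp only [flipSide, Prod.ext_iff, Bool.eq_not]
    constructor
    · intro hab
      have hv := (hQ.rel_comp a b hab).symm
      exact ⟨hv, fun h => (hrel _ ⟨a, rfl⟩ ⟨b, hv⟩).1 hab (h.symm.trans (τ_eq hv))⟩
    · rintro ⟨hv, hne⟩
      exact (hrel _ ⟨a, rfl⟩ ⟨b, hv⟩).2 fun h => hne ((τ_eq hv).trans h.symm)

theorem exists_length_ne (hQ : Q.IsGentle) : ∃ m, ∀ l : List A, l.IsChain Q.Permits →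
    l.length ≠ m := by
  obtain ⟨m, -, hm⟩ := hQ.admissible
  exact ⟨m, fun l hl hlen => hm l hlen (hl.imp fun _ _ h => h.1) (hl.imp fun _ _ h => h.2)⟩

theorem not_forall_permits_succ (hQ : Q.IsGentle) (a : ℕ → A) :
    ¬ ∀ n, Q.Permits (a n) (a (n + 1)) := by
  intro ha
  obtain ⟨m, hm⟩ := hQ.exists_length_ne
  refine hm ((List.range m).map a) ?_ (by rw [List.length_map, List.length_range])
  rw [List.isChain_map]
  exact (List.isChain_range _ _).2 fun n _ => ha n

theorem not_forall_succ_permits (hQ : Q.IsGentle) (a : ℕ → A) :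
    ¬ ∀ n, Q.Permits (a (n + 1)) (a n) := by
  intro ha
  obtain ⟨m, hm⟩ := hQ.exists_length_ne
  refine hm ((List.range m).map a).reverse ?_ ?_
  · rw [List.isChain_reverse, List.isChain_map]
    exact (List.isChain_range _ _).2 fun n _ => ha n
  · rw [List.length_reverse, List.length_map, List.length_range]

end IsGentle

namespace Polarization

variable (P : Q.Polarization)

/-- `y` is reached from `x` along an arrow; this becomes the covering relation of `P.graph`. -/
def Step (x y : V × Bool) : Prop := ∃ a, P.lo a = x ∧ P.hi a = y

theorem rightUnique_step : Relator.RightUnique P.Step := by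
  rintro _ _ _ ⟨a, rfl, rfl⟩ ⟨a', h, rfl⟩
  rw [P.lo_injective h]

theorem leftUnique_step : Relator.LeftUnique P.Step := by
  rintro _ _ _ ⟨a, rfl, rfl⟩ ⟨a', rfl, h⟩
  rw [P.hi_injective h]

theorem permits_of_lo_eq_hi {a b : A} (h : P.lo a = P.hi b) : Q.Permits a b := by
  refine ⟨by rw [← P.lo_fst, ← P.hi_fst, h], fun hrel => flipSide_ne (P.lo a) ?_⟩
  rw [← P.rel_iff.1 hrel, h]

theorem wellFounded_step (hQ : Q.IsGentle) : WellFounded P.Step := by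
  refine wellFounded_iff_isEmpty_descending_chain.2 ⟨fun ⟨f, hf⟩ => ?_⟩
  choose a hlo hhi using hf
  exact hQ.not_forall_permits_succ a fun n =>
    P.permits_of_lo_eq_hi ((hlo n).trans (hhi (n + 1)).symm)

theorem wellFounded_swap_step (hQ : Q.IsGentle) : WellFounded (Function.swap P.Step) := by
  refine wellFounded_iff_isEmpty_descending_chain.2 ⟨fun ⟨f, hf⟩ => ?_⟩
  choose a hlo hhi using hf
  exact hQ.not_forall_succ_permits a fun n =>
    P.permits_of_lo_eq_hi ((hlo (n + 1)).trans (hhi n).symm)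

theorem lo_ne_hi (hQ : Q.IsGentle) (a : A) : P.lo a ≠ P.hi a := fun h =>
  (P.wellFounded_step hQ).irrefl.irrefl (P.lo a) ⟨a, rfl, h.symm⟩

theorem reflTransGen_of_lo_eq_hi (hQ : Q.IsGentle) {W : Type*} {z : V × Bool → W}
    (hz : ∀ a, z (P.lo a) = z (P.hi a)) (x y : V × Bool) :
    Relation.ReflTransGen (fun u v => ∃ h, z h = u ∧ z (flipSide h) = v) (z x) (z y) := by
  have same_edge : ∀ {x y : V × Bool}, x.1 = y.1 →
      Relation.ReflTransGen (fun u v => ∃ h, z h = u ∧ z (flipSide h) = v) (z x) (z y) := by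
    intro x y hxy
    rcases fst_eq_iff_eq_or_eq_flipSide.1 hxy with rfl | rfl
    · exact .refl
    · exact .single ⟨_, rfl, by rw [flipSide_flipSide]⟩
  generalize hv : y.1 = v
  induction hQ.connected x.1 v generalizing y with
  | refl => exact same_edge hv.symm
  | tail _ harrow ih =>
    obtain ⟨a, ⟨rfl, rfl⟩ | ⟨rfl, rfl⟩⟩ := harrow
    · have hlo := ih (P.lo a) (P.lo_fst a)
      rw [hz] at hlo
      exact hlo.trans (same_edge ((P.hi_fst a).trans hv.symm))
    · have hhi := ih (P.hi a) (P.hi_fst a)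
      rw [← hz] at hhi
      exact hhi.trans (same_edge ((P.lo_fst a).trans hv.symm))

/-- The marked ribbon graph with half-edges `V × Bool` in which arrows are covering pairs; its
vertices are the chains of this order. -/
def graph (hQ : Q.IsGentle) :
    MRG (Quotient (comparableSetoid P.rightUnique_step P.leftUnique_step)) (V × Bool) where
  z := Quotient.mk _
  invh := flipSide
  inv_inv := flipSide_flipSide
  inv_ne := flipSide_ne
  z_surj := Quotient.exists_rep
  le := Relation.ReflTransGen P.Step
  le_refl _ := .refl
  le_trans := .trans
  le_antisymm := reflTransGen_antisymm_of_wellFounded (P.wellFounded_step hQ)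
  comp_iff _ _ :=
    (Quotient.eq (r := comparableSetoid P.rightUnique_step P.leftUnique_step)).symm
  connected := Quotient.ind₂ <| P.reflTransGen_of_lo_eq_hi hQ fun a =>
    Quotient.sound (Or.inl (.single ⟨a, rfl, rfl⟩))
  thick := by
    obtain ⟨a⟩ := hQ.has_arrow
    exact ⟨P.lo a, P.hi a, P.lo_ne_hi hQ a, Quotient.sound (Or.inl (.single ⟨a, rfl, rfl⟩))⟩

variable (hQ : Q.IsGentle)

theorem transGen_step_of_graph_lt {x y : V × Bool} (h : (P.graph hQ).lt x y) :
    Relation.TransGen P.Step x y :=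
  (Relation.reflTransGen_iff_eq_or_transGen.1 h.1).resolve_left h.2.symm

theorem graph_cov_iff {x y : V × Bool} : (P.graph hQ).Cov x y ↔ P.Step x y := by
  have lt_of_step : ∀ {x y}, P.Step x y → (P.graph hQ).lt x y := by
    rintro _ _ ⟨a, rfl, rfl⟩
    exact ⟨.single ⟨a, rfl, rfl⟩, P.lo_ne_hi hQ a⟩
  constructor
  · rintro ⟨hlt, hcov⟩
    obtain ⟨w, hxw, hwy⟩ := Relation.TransGen.head'_iff.1 (P.transGen_step_of_graph_lt hQ hlt)
    obtain rfl : w = y := by_contra fun hne => hcov w (lt_of_step hxw) ⟨hwy, hne⟩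
    exact hxw
  · refine fun hxy => ⟨lt_of_step hxy, fun w hxw hwy => ?_⟩
    obtain ⟨y', hxy', hy'w⟩ := Relation.TransGen.head'_iff.1 (P.transGen_step_of_graph_lt hQ hxw)
    obtain rfl := P.rightUnique_step hxy hxy'
    exact hwy.2 ((P.graph hQ).le_antisymm hwy.1 hy'w)

theorem locallyFinite_graph : (P.graph hQ).LocallyFinite where
  wf_lt := Subrelation.wf (P.transGen_step_of_graph_lt hQ) (P.wellFounded_step hQ).transGen
  wf_gt := Subrelation.wf
    (fun h => Relation.transGen_swap.2 (P.transGen_step_of_graph_lt hQ h))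
    (P.wellFounded_swap_step hQ).transGen

/-- A polarized gentle bound quiver is identified with `∇` of its graph. -/
def realization : Realization Q (P.graph hQ) where
  edgeOf := Prod.fst
  lo := P.lo
  hi := P.hi
  edgeOf_surjective := Prod.fst_surjective
  edgeOf_eq_iff := fst_eq_iff_eq_or_eq_flipSide
  cov a := (P.graph_cov_iff hQ).2 ⟨a, rfl, rfl⟩
  lo_injective := P.lo_injective
  exists_arrow := (P.graph_cov_iff hQ).1
  src_eq a := (P.lo_fst a).symm
  tgt_eq a := (P.hi_fst a).symm
  rel_iff := P.rel_iff

end Polarization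

end BQuiv

theorem stmt5_general :
    (∀ (V H : Type) (G : MRG V H), (∀ v, (G.z ⁻¹' {v}).Finite) →
      (∃ G' : MRG (PThread G.nabla) (PSplit G.nabla), IsDeltaOf G.nabla G') ∧
      (∀ (V' H' : Type) (G' : MRG V' H'), IsDeltaOf G.nabla G' → MRGIso G G')) ∧
    (∀ (V A : Type) (Q : BQuiv V A), (∀ v, {a | Q.src a = v}.Finite) →
      (∀ v, {a | Q.tgt a = v}.Finite) → Q.IsGentle →
      (∃ G' : MRG (PThread Q) (PSplit Q), IsDeltaOf Q G') ∧
      (∀ (V' H' : Type) (G' : MRG V' H'), IsDeltaOf Q G' → BQIso Q G'.nabla)) := by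
  constructor
  · intro V H G hG
    have := MRG.LocallyFinite.of_finite_fibers hG
    let R := Realization.ofNabla G
    exact ⟨R.isDeltaOf.exists_on_threads, fun _ _ _ h => R.mrgIso h⟩
  · intro V A Q hsrc htgt hQ
    obtain ⟨P⟩ := hQ.nonempty_polarization hsrc htgt
    have := P.locallyFinite_graph hQ
    let R := P.realization hQ
    exact ⟨R.isDeltaOf.exists_on_threads, fun _ _ _ h => R.bqIso.trans (R.mrgIso h).nabla⟩

/-- (i) Every marked ribbon graph `(G, ≤)` is isomorphic, as a marked ribbon graph, to
`△(∇(G, ≤))` (in particular `△(∇(G, ≤))` exists);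
(ii) every gentle bound quiver `(Q, I)` is isomorphic, as a bound quiver, to
`∇(△(Q, I))` (in particular `△(Q, I)` exists). -/
theorem stmt5 :
    (∀ (V H : Type) [Fintype V] [Fintype H] (G : MRG V H),
      (∃ G' : MRG (PThread G.nabla) (PSplit G.nabla), IsDeltaOf G.nabla G') ∧
      (∀ (V' H' : Type) (G' : MRG V' H'), IsDeltaOf G.nabla G' → MRGIso G G')) ∧
    (∀ (V A : Type) [Fintype V] [Fintype A] (Q : BQuiv V A), Q.IsGentle →
      (∃ G' : MRG (PThread Q) (PSplit Q), IsDeltaOf Q G') ∧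
      (∀ (V' H' : Type) (G' : MRG V' H'), IsDeltaOf Q G' → BQIso Q G'.nabla)) :=
  ⟨fun V H _ _ G => stmt5_general.1 V H G fun _ => Set.toFinite _,
    fun V A _ _ Q => stmt5_general.2 V A Q (fun _ => Set.toFinite _) fun _ => Set.toFinite _⟩
end

section
/- Let (G,≤) be a marked ribbon graph. Then the maps sending an anti-walk to its target vertex, respectively to its source vertex, are bijections from the set of anti-walks of (G,≤) onto the vertex set V(G). Moreover, the target half-edge of the unique anti-walk with target vertex α is the maximal half-edge at α, and the source half-edge of any anti-walk is the minimal half-edge at its source vertex. -/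
/-!
Relate two ordered edges when they may be consecutive in an anti-walk. Inside a chain the direct
successor and the direct predecessor are unique, so this relation is bi-unique, that is, a partial
injection of the finite set of ordered edges. An anti-walk is a maximal path of the relation.
Starting at an element outside its range and following a partial injection never closes up into a
cycle, hence each such element starts exactly one maximal path; dually for the ends of paths. An
ordered edge is a possible first edge exactly when its target half-edge is maximal, and every
vertex carries exactly one maximal half-edge.
-/

set_option autoImplicit false

attribute [local instance] Classical.propDecidable

namespace MRG

variable {V H : Type}

/-- An ordered edge of the graph: a pair `(h′, h″)` of half-edges with `h″ = ι h′`;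
the first component is the target half-edge, the second the source half-edge. -/
def OE (G : MRG V H) : Type := {p : H × H // p.2 = G.invh p.1}

/-- The target half-edge of an ordered edge. -/
def OE.tH {G : MRG V H} (i : OE G) : H := i.1.1

/-- The source half-edge of an ordered edge. -/
def OE.sH {G : MRG V H} (i : OE G) : H := i.1.2

/-- The target vertex of an ordered edge. -/
def OE.tvx {G : MRG V H} (i : OE G) : V := G.z i.1.1

/-- The source vertex of an ordered edge. -/
def OE.svx {G : MRG V H} (i : OE G) : V := G.z i.1.2

/-- The inverse of an ordered edge. -/
def OE.inv {G : MRG V H} (i : OE G) : OE G :=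
  ⟨(i.1.2, i.1.1), by rw [i.2, G.inv_inv]⟩

/-- `l` is (the list of ordered edges of) a walk of `G`, written from right to left. -/
def IsWalkL (G : MRG V H) (l : List (OE G)) : Prop :=
  l.Chain' (fun i j => OE.svx i = OE.tvx j)

/-- The walk `l` is reduced: no ordered edge is immediately followed by its inverse. -/
def IsRedL (G : MRG V H) (l : List (OE G)) : Prop :=
  l.Chain' (fun i j => j ≠ OE.inv i)

/-- `b` is the direct successor of `a` with respect to `≤`. -/
def DSucc (G : MRG V H) (a b : H) : Prop := G.Cov a b

/-- Anti-walks of `(G, ≤)`: non-trivial walks `i₁⋯i_L i_{L+1}` in which, for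
consecutive ordered edges, the source half-edge of `iₜ` is the direct successor of the
target half-edge of `iₜ₊₁` with respect to `≤`, maximal with this property. -/
def IsAntiWalkL (G : MRG V H) (l : List (OE G)) : Prop :=
  l ≠ [] ∧ G.IsWalkL l ∧
  l.Chain' (fun i j => G.DSucc (OE.tH j) (OE.sH i)) ∧
  (∀ i, l.head? = some i → ∀ i0 : OE G, ¬ G.DSucc (OE.tH i) (OE.sH i0)) ∧
  (∀ i, l.getLast? = some i → ∀ i2 : OE G, ¬ G.DSucc (OE.tH i2) (OE.sH i))

end MRG

open MRG

section MaximalPath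

variable {α : Type*} {R : α → α → Prop}

lemma acc_flip_of_leftUnique [Finite α] (hR : Relator.LeftUnique R) {a : α}
    (ha : ∀ b, ¬ R b a) : Acc (flip R) a := by
  by_contra hacc
  obtain ⟨f, rfl, hf⟩ := not_acc_iff_exists_descending_chain.mp hacc
  have f_injective : ∀ m n, f m = f n → m = n := by
    intro m
    induction m with
    | zero =>
      rintro (_ | n) hmn
      · rfl
      · exact absurd (hmn ▸ hf n) (ha _)
    | succ m ih =>
      rintro (_ | n) hmn
      · exact absurd (hmn ▸ hf m) (ha _)
      · exact congrArg _ (ih n (hR (hf m) (hmn ▸ hf n)))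
  exact not_injective_infinite_finite f f_injective

lemma exists_isChain_cons_terminal {a : α} (ha : Acc (flip R) a) :
    ∃ l, (a :: l).IsChain R ∧ ∀ c, ¬ R ((a :: l).getLast (List.cons_ne_nil a l)) c := by
  induction ha with
  | intro a _ ih =>
    by_cases hterm : ∃ b, R a b
    · obtain ⟨b, hab⟩ := hterm
      obtain ⟨l, hchain, hlast⟩ := ih b hab
      exact ⟨b :: l, hchain.cons_cons hab, hlast⟩
    · exact ⟨[], List.isChain_singleton a, not_exists.mp hterm⟩

lemma eq_of_isChain_cons_terminal (hR : Relator.RightUnique R) {a : α} {l l' : List α}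
    (hl : (a :: l).IsChain R) (hl' : (a :: l').IsChain R)
    (hlast : ∀ c, ¬ R ((a :: l).getLast (List.cons_ne_nil a l)) c)
    (hlast' : ∀ c, ¬ R ((a :: l').getLast (List.cons_ne_nil a l')) c) : l = l' := by
  induction l generalizing a l' with
  | nil =>
    cases l' with
    | nil => rfl
    | cons b' l' => exact absurd hl'.rel (hlast b')
  | cons b l ih =>
    cases l' with
    | nil => exact absurd hl.rel (hlast' b)
    | cons b' l' =>
      obtain rfl : b = b' := hR hl.rel hl'.rel
      rw [ih hl.tail hl'.tail hlast hlast']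

/-- A nonempty path `l` of the relation `R` that can be extended at neither end: nothing is related
to its first element and its last element is related to nothing. -/
structure IsMaximalPath (R : α → α → Prop) (l : List α) : Prop where
  ne_nil : l ≠ []
  isChain : l.IsChain R
  head_initial : ∀ b, ¬ R b (l.head ne_nil)
  getLast_terminal : ∀ b, ¬ R (l.getLast ne_nil) b

namespace IsMaximalPath

lemma reverse {l : List α} (hl : IsMaximalPath R l) : IsMaximalPath (flip R) l.reverse where
  ne_nil := List.reverse_ne_nil_iff.mpr hl.ne_nil
  isChain := List.isChain_reverse.mpr hl.isChain
  head_initial b := by simpa only [flip, List.head_reverse] using hl.getLast_terminal b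
  getLast_terminal b := by simpa only [flip, List.getLast_reverse] using hl.head_initial b

theorem bijective_head [Finite α] (hR : Relator.BiUnique R) :
    Function.Bijective fun l : {l : List α // IsMaximalPath R l} ↦
      (⟨l.1.head l.2.ne_nil, l.2.head_initial⟩ : {a // ∀ b, ¬ R b a}) := by
  constructor
  · rintro ⟨_ | ⟨a, l⟩, hl⟩ ⟨_ | ⟨a', l'⟩, hl'⟩ hhead
    · rfl
    · exact absurd rfl hl.ne_nil
    · exact absurd rfl hl'.ne_nil
    · obtain rfl : a = a' := congrArg Subtype.val hhead
      obtain rfl := eq_of_isChain_cons_terminal hR.2 hl.isChain hl'.isChain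
        hl.getLast_terminal hl'.getLast_terminal
      rfl
  · rintro ⟨a, ha⟩
    obtain ⟨l, hchain, hlast⟩ := exists_isChain_cons_terminal (acc_flip_of_leftUnique hR.1 ha)
    exact ⟨⟨a :: l, List.cons_ne_nil a l, hchain, ha, hlast⟩, rfl⟩

/-- Reversal, as a bijection between the maximal paths of `R` and those of the flipped relation;
it carries statements about the first element to statements about the last. -/
def reverseEquiv (R : α → α → Prop) :
    {l : List α // IsMaximalPath R l} ≃ {l : List α // IsMaximalPath (flip R) l} where
  toFun l := ⟨l.1.reverse, l.2.reverse⟩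
  invFun l := ⟨l.1.reverse, l.2.reverse⟩
  left_inv l := Subtype.ext l.1.reverse_reverse
  right_inv l := Subtype.ext l.1.reverse_reverse

theorem bijective_getLast [Finite α] (hR : Relator.BiUnique R) :
    Function.Bijective fun l : {l : List α // IsMaximalPath R l} ↦
      (⟨l.1.getLast l.2.ne_nil, l.2.getLast_terminal⟩ : {a // ∀ b, ¬ R a b}) := by
  have hflip : Relator.BiUnique (flip R) := ⟨fun _ _ _ h h' ↦ hR.2 h h', hR.1.flip⟩
  simpa only [Function.comp_def, reverseEquiv, Equiv.coe_fn_mk, List.head_reverse, flip] using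
    (bijective_head hflip).comp (reverseEquiv R).bijective

end IsMaximalPath

end MaximalPath

section ChainFibers

variable {α β : Type*} [PartialOrder α] {f : α → β}

lemma isMax_iff_forall_not_covBy [WellFoundedLT α] {a : α} : IsMax a ↔ ∀ b, ¬ a ⋖ b :=
  ⟨fun ha _ hab ↦ ha.not_lt hab.lt, fun ha ↦ by
    by_contra hmax
    obtain ⟨b, hab⟩ := exists_covBy_of_wellFoundedLT hmax
    exact ha b hab⟩

lemma isMin_iff_forall_not_covBy [WellFoundedGT α] {a : α} : IsMin a ↔ ∀ b, ¬ b ⋖ a := by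
  rw [← isMax_toDual_iff, isMax_iff_forall_not_covBy, OrderDual.forall]
  simp only [toDual_covBy_toDual_iff]

lemma rightUnique_covBy (hf : ∀ a b, a ≤ b ∨ b ≤ a ↔ f a = f b) :
    Relator.RightUnique fun a b : α ↦ a ⋖ b := by
  intro a b c hab hac
  have hbc : f b = f c := ((hf a b).mp (.inl hab.le)).symm.trans ((hf a c).mp (.inl hac.le))
  rcases (hf b c).mpr hbc with hle | hle
  · exact (hac.eq_or_eq hab.le hle).resolve_left hab.ne'
  · exact ((hab.eq_or_eq hac.le hle).resolve_left hac.ne').symm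

lemma leftUnique_covBy (hf : ∀ a b, a ≤ b ∨ b ≤ a ↔ f a = f b) :
    Relator.LeftUnique fun a b : α ↦ a ⋖ b := fun _ _ _ hac hbc ↦
  rightUnique_covBy (α := αᵒᵈ) (fun a b ↦ hf b a |>.trans eq_comm) hac.toDual hbc.toDual

theorem bijective_isMax [WellFoundedGT α] (hf : ∀ a b, a ≤ b ∨ b ≤ a ↔ f a = f b)
    (hsurj : Function.Surjective f) : Function.Bijective fun a : {a : α // IsMax a} ↦ f a := by
  constructor
  · rintro ⟨a, ha⟩ ⟨b, hb⟩ hab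
    rcases (hf a b).mpr hab with hle | hle
    · exact Subtype.ext (ha.eq_of_le hle)
    · exact Subtype.ext (hb.eq_of_ge hle)
  · intro v
    obtain ⟨a, rfl⟩ := hsurj v
    obtain ⟨b, hab, hb⟩ := exists_maximal_ge_of_wellFoundedGT (fun _ : α ↦ True) a trivial
    exact ⟨⟨b, maximal_true.mp hb⟩, ((hf a b).mp (.inl hab)).symm⟩

theorem bijective_isMin [WellFoundedLT α] (hf : ∀ a b, a ≤ b ∨ b ≤ a ↔ f a = f b)
    (hsurj : Function.Surjective f) : Function.Bijective fun a : {a : α // IsMin a} ↦ f a :=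
  bijective_isMax (α := αᵒᵈ) (fun a b ↦ hf b a |>.trans eq_comm) hsurj

end ChainFibers

namespace MRG

variable {V H : Type} {G : MRG V H}

/-- The half-edges of `G`: a copy of `H` that remembers `G`, so that it can carry the order
of `G` as an instance. -/
def HalfEdge (_ : MRG V H) : Type := H

instance [Finite H] : Finite G.HalfEdge := inferInstanceAs (Finite H)

instance : PartialOrder G.HalfEdge where
  le := G.le
  lt := G.lt
  le_refl := G.le_refl
  le_trans _ _ _ := G.le_trans
  le_antisymm _ _ := G.le_antisymm
  lt_iff_le_not_ge _ _ :=
    ⟨fun h ↦ ⟨h.1, fun hle ↦ h.2 (G.le_antisymm h.1 hle)⟩,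
      fun h ↦ ⟨h.1, fun heq ↦ h.2 (heq ▸ G.le_refl _)⟩⟩

/-- The vertex `z(h)` at which the half-edge `h` lies. -/
def HalfEdge.vertex (h : G.HalfEdge) : V := G.z h

lemma HalfEdge.le_or_le_iff_vertex_eq (h h' : G.HalfEdge) :
    h ≤ h' ∨ h' ≤ h ↔ h.vertex = h'.vertex :=
  G.comp_iff h h'

/-- An ordered edge is determined by its target half-edge, which may be arbitrary. -/
def OE.targetEquiv : OE G ≃ G.HalfEdge where
  toFun := OE.tH
  invFun h := ⟨(h, G.invh h), rfl⟩
  left_inv i := Subtype.ext (Prod.ext rfl i.2.symm)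
  right_inv _ := rfl

/-- An ordered edge is determined by its source half-edge, which may be arbitrary. -/
def OE.sourceEquiv : OE G ≃ G.HalfEdge where
  toFun := OE.sH
  invFun h := ⟨(G.invh h, h), (G.inv_inv h).symm⟩
  left_inv i := Subtype.ext (Prod.ext ((congrArg G.invh i.2).trans (G.inv_inv _)) rfl)
  right_inv _ := rfl

instance [Finite H] : Finite (OE G) := Finite.of_equiv _ OE.targetEquiv.symm

/-- The relation between consecutive ordered edges `iₜ`, `iₜ₊₁` of an anti-walk: the source
half-edge of the former is the direct successor of the target half-edge of the latter. -/
def AntiStep (i j : OE G) : Prop := OE.targetEquiv j ⋖ OE.sourceEquiv i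

lemma biUnique_antiStep : Relator.BiUnique (AntiStep (G := G)) :=
  ⟨fun _ _ _ hik hjk ↦
      OE.sourceEquiv.injective (rightUnique_covBy HalfEdge.le_or_le_iff_vertex_eq hik hjk),
    fun _ _ _ hij hik ↦
      OE.targetEquiv.injective (leftUnique_covBy HalfEdge.le_or_le_iff_vertex_eq hij hik)⟩

lemma forall_not_antiStep_left_iff [Finite H] (i : OE G) :
    (∀ j, ¬ AntiStep j i) ↔ IsMax (OE.targetEquiv i) :=
  (OE.sourceEquiv.forall_congr_right (q := fun h ↦ ¬ OE.targetEquiv i ⋖ h)).trans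
    isMax_iff_forall_not_covBy.symm

lemma forall_not_antiStep_right_iff [Finite H] (i : OE G) :
    (∀ j, ¬ AntiStep i j) ↔ IsMin (OE.sourceEquiv i) :=
  (OE.targetEquiv.forall_congr_right (q := fun h ↦ ¬ h ⋖ OE.sourceEquiv i)).trans
    isMin_iff_forall_not_covBy.symm

lemma AntiStep.svx_eq_tvx {i j : OE G} (hij : AntiStep i j) : OE.svx i = OE.tvx j :=
  ((HalfEdge.le_or_le_iff_vertex_eq _ _).mp (.inl hij.le)).symm

lemma isAntiWalkL_iff_isMaximalPath (l : List (OE G)) :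
    G.IsAntiWalkL l ↔ IsMaximalPath AntiStep l := by
  constructor
  · rintro ⟨hne, -, hchain, hhead, hlast⟩
    exact ⟨hne, hchain, hhead _ (List.head?_eq_some_head hne),
      hlast _ (List.getLast?_eq_some_getLast hne)⟩
  · rintro ⟨hne, hchain, hhead, hlast⟩
    refine ⟨hne, hchain.imp fun _ _ ↦ AntiStep.svx_eq_tvx, hchain, fun i hi ↦ ?_, fun i hi ↦ ?_⟩
    · exact List.head_of_head?_eq_some hi ▸ hhead
    · exact List.getLast_of_getLast?_eq_some hi ▸ hlast

end MRG

/-- Let `(G, ≤)` be a marked ribbon graph.  Then the maps sending an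
anti-walk to its target vertex, respectively to its source vertex, are bijections from
the set of anti-walks of `(G, ≤)` onto `V(G)`.  Moreover, the target half-edge of the
unique anti-walk with target vertex `α` is the maximal half-edge at `α`, and the source
half-edge of any anti-walk is the minimal half-edge at its source vertex. -/
theorem stmt6 {V H : Type} [Fintype V] [Fintype H] (G : MRG V H) :
    Function.Bijective
      (fun w : {l : List (OE G) // G.IsAntiWalkL l} => OE.tvx (w.1.head w.2.1)) ∧
    Function.Bijective
      (fun w : {l : List (OE G) // G.IsAntiWalkL l} => OE.svx (w.1.getLast w.2.1)) ∧
    (∀ l : List (OE G), G.IsAntiWalkL l → ∀ i, l.head? = some i →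
      ∀ h : H, G.z h = OE.tvx i → G.le h (OE.tH i)) ∧
    (∀ l : List (OE G), G.IsAntiWalkL l → ∀ i, l.getLast? = some i →
      ∀ h : H, G.z h = OE.svx i → G.le (OE.sH i) h) := by
  have antiWalk_bijective :=
    (Equiv.subtypeEquivRight (isAntiWalkL_iff_isMaximalPath (G := G))).bijective
  refine ⟨?_, ?_, fun l hl i hi h hz ↦ ?_, fun l hl i hi h hz ↦ ?_⟩
  · exact (bijective_isMax HalfEdge.le_or_le_iff_vertex_eq G.z_surj).comp <|
      (OE.targetEquiv.subtypeEquiv forall_not_antiStep_left_iff).bijective.comp <|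
      (IsMaximalPath.bijective_head biUnique_antiStep).comp antiWalk_bijective
  · exact (bijective_isMin HalfEdge.le_or_le_iff_vertex_eq G.z_surj).comp <|
      (OE.sourceEquiv.subtypeEquiv forall_not_antiStep_right_iff).bijective.comp <|
      (IsMaximalPath.bijective_getLast biUnique_antiStep).comp antiWalk_bijective
  · have hmax := (forall_not_antiStep_left_iff i).mp (hl.2.2.2.1 i hi)
    exact ((HalfEdge.le_or_le_iff_vertex_eq h _).mpr hz).elim id fun hle ↦ hmax hle
  · have hmin := (forall_not_antiStep_right_iff i).mp (hl.2.2.2.2 i hi)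
    exact ((HalfEdge.le_or_le_iff_vertex_eq h _).mpr hz).elim (fun hle ↦ hmin hle) id
end

section
/- Let (Q,I) be a gentle bound quiver with marked ribbon graph (G,≤) = △(Q,I), and identify the edges of G with the vertices Q0 of Q. For a reduced walk ij of length two in G (j ≠ i^{-1}), let ⟨i|j⟩ denote the corresponding homotopy letter of (Q,I): if the source half-edge of i is h^α_s and the target half-edge of j is h^α_t in the chain at a vertex α of G with s < t, then ⟨i|j⟩ := α_{s+1}⋯α_t is the corresponding permitted path of Q along the permitted thread η^α, and ⟨i|j⟩ := ⟨j^{-1}|i^{-1}⟩^{-1} when s > t. Then the map sending a reduced walk w = i1 i2 ⋯ iL i_{L+1} of G to ∇(w) := ⟨i1|i2⟩⟨i2|i3⟩⋯⟨iL|i_{L+1}⟩ is a bijection from the set of reduced walks of G of length at least two onto the set of non-trivial reduced walks of the quiver Q, and it satisfies ∇(w^{-1}) = ∇(w)^{-1}. -/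
set_option autoImplicit false

attribute [local instance] Classical.propDecidable

namespace BQuiv

variable {V A : Type}

/-- The Cartan matrix of the gentle algebra `kQ/I`: its `(i, j)` entry is the number of
permitted paths with source `j` and target `i` (which equals `dim_k Hom(P_i, P_j)`). -/
noncomputable def cartan (Q : BQuiv V A) : Matrix V V ℤ :=
  fun i j => (Nat.card {p : Path Q // p.Permitted ∧ p.base = j ∧ p.tgtV = i} : ℤ)

/-- The (edge-vertex) incidence matrix of the marked ribbon graph `△(Q, I)`, with edges
identified with `Q₀` (via centers) and vertices with the permitted threads (transported
along a bijection `e` with a finite index type `W`): the entry at `(i, w)` is the number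
of half-edges of the edge `i` incident to the vertex `e w`, i.e. the number of split
permitted threads with center `i` lying over the thread `e w`. -/
noncomputable def dInc (Q : BQuiv V A) {W : Type} (e : W ≃ PThread Q) : Matrix V W ℤ :=
  fun i w => (Nat.card {x : PSplit Q // x.center = i ∧ x.thread = e w} : ℤ)

end BQuiv

namespace BQuiv

variable {V A : Type}

/-- An ordered edge of the marked ribbon graph `△(Q, I)`: a pair `(h′, h″)` of
half-edges with `h″ = ι h′`, i.e. a pair of distinct split permitted threads with the
same center.  The first component is the target half-edge, the second the source
half-edge. -/
def DOE (Q : BQuiv V A) : Type :=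
  {p : PSplit Q × PSplit Q // p.1 ≠ p.2 ∧ p.1.center = p.2.center}

/-- The target half-edge of an ordered edge of `△(Q, I)`. -/
def DOE.tS {Q : BQuiv V A} (i : DOE Q) : PSplit Q := i.1.1

/-- The source half-edge of an ordered edge of `△(Q, I)`. -/
def DOE.sS {Q : BQuiv V A} (i : DOE Q) : PSplit Q := i.1.2

/-- The target vertex (a permitted thread) of an ordered edge of `△(Q, I)`. -/
def DOE.tvx {Q : BQuiv V A} (i : DOE Q) : PThread Q := i.1.1.thread

/-- The source vertex (a permitted thread) of an ordered edge of `△(Q, I)`. -/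
def DOE.svx {Q : BQuiv V A} (i : DOE Q) : PThread Q := i.1.2.thread

/-- The underlying (unordered) edge of an ordered edge of `△(Q, I)`, identified with a
vertex of `Q` via centers. -/
def DOE.ctr {Q : BQuiv V A} (i : DOE Q) : V := i.1.1.center

/-- The inverse of an ordered edge of `△(Q, I)`. -/
def DOE.inv {Q : BQuiv V A} (i : DOE Q) : DOE Q :=
  ⟨(i.1.2, i.1.1), ⟨Ne.symm i.2.1, i.2.2.symm⟩⟩

/-- `l` is (the list of ordered edges of) a walk of `△(Q, I)`, written from right to
left. -/
def IsDWalk (Q : BQuiv V A) (l : List (DOE Q)) : Prop :=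
  l.Chain' (fun i j => DOE.svx i = DOE.tvx j)

/-- The walk `l` of `△(Q, I)` is reduced. -/
def IsDRed (Q : BQuiv V A) (l : List (DOE Q)) : Prop :=
  l.Chain' (fun i j => j ≠ DOE.inv i)

/-- `y` is the direct successor of `x` in the half-edge order of `△(Q, I)`: `x` and `y`
lie over the same thread and `y` covers `x` (the half-edge `h^α_t` corresponds to the
split `(α, t)` and `h^α_t < h^α_{t-1}` is a covering). -/
def DSucc {Q : BQuiv V A} (x y : PSplit Q) : Prop :=
  x.thread = y.thread ∧ x.idx = y.idx + 1

/-- Anti-walks of `△(Q, I)`: non-trivial walks `i₁⋯i_{L+1}` in which the source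
half-edge of `iₜ` is the direct successor of the target half-edge of `iₜ₊₁` with
respect to `≤`, maximal with this property. -/
def IsAntiDW (Q : BQuiv V A) (l : List (DOE Q)) : Prop :=
  l ≠ [] ∧ IsDWalk Q l ∧
  l.Chain' (fun i j => DSucc (DOE.tS j) (DOE.sS i)) ∧
  (∀ i, l.head? = some i → ∀ i0 : DOE Q, ¬ DSucc (DOE.tS i) (DOE.sS i0)) ∧
  (∀ i, l.getLast? = some i → ∀ i2 : DOE Q, ¬ DSucc (DOE.tS i2) (DOE.sS i)) 

/-- The incidence vector of a walk `w = i₁⋯i_{L+1}` of `△(Q, I)`: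
`inc(w) = Σₜ (-1)ᵗ e_{ē(i_{t+1})} ∈ ℤ^{Q₀}`. -/
noncomputable def incVec {Q : BQuiv V A} : List (DOE Q) → V → ℤ
  | [] => fun _ => 0
  | i :: l => fun v => (if DOE.ctr i = v then 1 else 0) - incVec l v

end BQuiv

namespace BQuiv

variable {V A : Type}

/-- A letter of a walk of the quiver: an arrow `(a, true)` or a formal inverse
`(a, false)`. -/
abbrev Letter (A : Type) : Type := A × Bool

/-- The source vertex of a letter. -/
def lsrc (Q : BQuiv V A) (c : Letter A) : V := if c.2 then Q.src c.1 else Q.tgt c.1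

/-- The target vertex of a letter. -/
def ltgt (Q : BQuiv V A) (c : Letter A) : V := if c.2 then Q.tgt c.1 else Q.src c.1

/-- The inverse of a letter. -/
def linv (c : Letter A) : Letter A := (c.1, !c.2)

/-- `l` is (the list of letters of) a walk of the quiver, written from right to left. -/
def WalkChain (Q : BQuiv V A) (l : List (Letter A)) : Prop :=
  l.Chain' (fun c d => Q.lsrc c = Q.ltgt d)

/-- A walk is closed when its source equals its target. -/
def WalkClosed (Q : BQuiv V A) (l : List (Letter A)) : Prop :=
  ∀ c, l.head? = some c → ∀ d, l.getLast? = some d → Q.lsrc d = Q.ltgt c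

/-- A walk has no repeated edges when no arrow occurs twice (in either direction). -/
def NoRepeatedEdges (l : List (Letter A)) : Prop := (l.map Prod.fst).Nodup

/-- The number of relations of `R` contained in the closed walk `w = c₁⋯c_ℓ`: the
number of length-two subpaths of `w` or of `w⁻¹` lying in `R`, including the
wrap-around pairs `c_ℓc₁` and `c₁⁻¹c_ℓ⁻¹` when they consist of arrows and lie in `R`.
(Computed over the cyclically consecutive pairs of letters of `w`.) -/
noncomputable def relCount (Q : BQuiv V A) (l : List (Letter A)) : ℕ :=
  ((l.zip (l.rotate 1)).map (fun cd =>
    if (cd.1.2 = true ∧ cd.2.2 = true ∧ Q.rel cd.1.1 cd.2.1) ∨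
       (cd.1.2 = false ∧ cd.2.2 = false ∧ Q.rel cd.2.1 cd.1.1)
    then (1 : ℕ) else 0)).sum

/-- `(Q, I)` satisfies the multi-clock condition: every non-trivial closed walk of `Q`
without repeated edges contains an even number of relations. -/
def MultiClock (Q : BQuiv V A) : Prop :=
  ∀ l : List (Letter A), l ≠ [] → Q.WalkChain l → Q.WalkClosed l →
    NoRepeatedEdges l → Even (Q.relCount l)

end BQuiv

namespace BQuiv

variable {V A : Type}

/-- The homotopy letter `⟨i|j⟩` of `(Q, I)` associated with a reduced length-two walk
`ij` of `△(Q, I)`: if the source half-edge of `i` is `h^α_s` and the target half-edge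
of `j` is `h^α_t` in the chain at the vertex (permitted thread) `α`, then for `s < t`
it is the permitted path `α_{s+1}⋯α_t` of `Q` (a list of direct letters), and for
`s > t` it is the formal inverse `⟨j⁻¹|i⁻¹⟩⁻¹` (a list of inverse letters). -/
def letterOf {Q : BQuiv V A} (i j : DOE Q) : List (Letter A) :=
  let p := (DOE.sS i).thread
  let s := (DOE.sS i).idx
  let t := (DOE.tS j).idx
  if s < t then ((p.1.arrows.drop s).take (t - s)).map (fun a => (a, true))
  else (((p.1.arrows.drop t).take (s - t)).map (fun a => (a, false))).reverse

/-- The walk `∇(w)` of the quiver `Q` associated with a reduced walk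
`w = i₁i₂⋯i_L i_{L+1}` of `△(Q, I)`: the concatenation
`⟨i₁|i₂⟩⟨i₂|i₃⟩⋯⟨i_L|i_{L+1}⟩` of the homotopy letters of its consecutive pairs. -/
def nablaW {Q : BQuiv V A} (l : List (DOE Q)) : List (Letter A) :=
  (List.zipWith letterOf l l.tail).flatten

end BQuiv

open BQuiv

/-!
An arrow `c` of `Q`, and likewise its formal inverse, lies on a unique permitted thread, and its
target end is a half-edge of `G` on that thread. Over each vertex of `Q` there are exactly two
half-edges: gentleness leaves at most two classes of arrow ends, and a trivial thread exists
precisely when there is only one. So each half-edge is the source of exactly one ordered edge of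
`G`, and the target of exactly one.

Inside a homotopy letter, consecutive letters `c d` meet at one half-edge: the source end of `c` is
the target end of `d`. Between two consecutive homotopy letters `⟨i|k⟩⟨k|j⟩`, they meet at the two
different half-edges of the edge `k`. Hence a reduced walk of `Q` is cut into homotopy letters
exactly where consecutive letters lie on different half-edges, and the two ends of each piece
recover the ordered edges of the walk of `G`.
-/

namespace BQuiv

theorem exists_eq_cons_cons_of_two_le_length {α : Type*} {l : List α} (h : 2 ≤ l.length) :
    ∃ a b t, l = a :: b :: t := by
  match l, h with
  | a :: b :: t, _ => exact ⟨a, b, t, rfl⟩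

section MaximalChain

variable {α : Type*} {R S : α → α → Prop} {l l' : List α}

theorem isChain_and_iff :
    l.IsChain (fun a b => R a b ∧ S a b) ↔ l.IsChain R ∧ l.IsChain S := by
  simp only [List.isChain_iff_getElem, forall_and]

theorem rel_of_isChain_of_getElem? {n : ℕ} {a b : α} (h : l.IsChain S)
    (ha : l[n]? = some a) (hb : l[n + 1]? = some b) : S a b := by
  obtain ⟨_, rfl⟩ := List.getElem?_eq_some_iff.1 ha
  obtain ⟨hn, rfl⟩ := List.getElem?_eq_some_iff.1 hb
  exact List.isChain_iff_getElem.1 h n hn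

/-- A chain of the relation `S` that cannot be prolonged at either end. The permitted threads are
the maximal chains of `PermPair`; counting the empty list as maximal lets this cover the trivial
ones. -/
structure IsMaximalChain (S : α → α → Prop) (l : List α) : Prop where
  isChain : l.IsChain S
  not_rel_head : ∀ b ∈ l.head?, ∀ a, ¬ S a b
  not_getLast_rel : ∀ a ∈ l.getLast?, ∀ b, ¬ S a b

namespace IsMaximalChain

theorem getElem?_succ {n : ℕ} {a b : α} (h : IsMaximalChain S l) (hS : Relator.RightUnique S)
    (ha : l[n]? = some a) (hab : S a b) : l[n + 1]? = some b := by
  obtain ⟨hn, rfl⟩ := List.getElem?_eq_some_iff.1 ha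
  by_cases hn' : n + 1 < l.length
  · rw [List.getElem?_eq_getElem hn', hS (List.isChain_iff_getElem.1 h.isChain n hn') hab]
  · have hlast : l[n] ∈ l.getLast? := by
      rwa [List.getLast?_eq_getElem?, show l.length - 1 = n by omega]
    exact absurd hab (h.not_getLast_rel _ hlast b)

theorem getElem?_pred {n : ℕ} {a b : α} (h : IsMaximalChain S l) (hS : Relator.LeftUnique S)
    (hb : l[n]? = some b) (hab : S a b) : ∃ k, n = k + 1 ∧ l[k]? = some a := by
  cases n with
  | zero => exact absurd hab (h.not_rel_head b (by rwa [List.head?_eq_getElem?]) a)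
  | succ k =>
    obtain ⟨hk, rfl⟩ := List.getElem?_eq_some_iff.1 hb
    have hrel := List.isChain_iff_getElem.1 h.isChain k hk
    exact ⟨k, rfl, by rw [List.getElem?_eq_getElem (by omega), hS hrel hab]⟩

theorem index_eq_and_getElem?_zero_eq (hS : Relator.LeftUnique S) (h : IsMaximalChain S l)
    (h' : IsMaximalChain S l') {n n' : ℕ} {a : α} (ha : l[n]? = some a) (ha' : l'[n']? = some a) :
    n = n' ∧ l[0]? = l'[0]? := by
  induction n generalizing n' a with
  | zero =>
    cases n' with
    | zero => exact ⟨rfl, ha.trans ha'.symm⟩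
    | succ k =>
      have hk : k < l'.length := by have := (List.getElem?_eq_some_iff.1 ha').1; omega
      have hrel := rel_of_isChain_of_getElem? h'.isChain (List.getElem?_eq_getElem hk) ha'
      obtain ⟨_, hj, _⟩ := h.getElem?_pred hS ha hrel
      omega
  | succ n ih =>
    have hn : n < l.length := by have := (List.getElem?_eq_some_iff.1 ha).1; omega
    have hpred := List.getElem?_eq_getElem hn
    obtain ⟨k, rfl, hk⟩ :=
      h'.getElem?_pred hS ha' (rel_of_isChain_of_getElem? h.isChain hpred ha)
    exact (ih hpred hk).imp_left (congrArg (· + 1))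

theorem eq_of_getElem?_zero_eq (hS : Relator.RightUnique S) (h : IsMaximalChain S l)
    (h' : IsMaximalChain S l') (h0 : l[0]? = l'[0]?) : l = l' := by
  have hsub : ∀ {l l' : List α}, IsMaximalChain S l → IsMaximalChain S l' → l[0]? = l'[0]? →
      ∀ (k : ℕ) (b : α), l[k]? = some b → l'[k]? = some b := by
    intro l l' h h' h0 k
    induction k with
    | zero => exact fun b hb => h0 ▸ hb
    | succ k ih =>
      intro b hb
      have hk : k < l.length := by have := (List.getElem?_eq_some_iff.1 hb).1; omega
      have hpred := List.getElem?_eq_getElem hk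
      exact h'.getElem?_succ hS (ih _ hpred) (rel_of_isChain_of_getElem? h.isChain hpred hb)
  exact List.ext_getElem? fun k => Option.ext fun b => ⟨hsub h h' h0 k b, hsub h' h h0.symm k b⟩

end IsMaximalChain

theorem exists_isChain_cons_of_length_lt {k : ℕ} {a : α}
    (hk : ∀ t : List α, (a :: t).IsChain S → t.length < k) :
    ∃ t : List α, (a :: t).IsChain S ∧ ∀ b ∈ (a :: t).getLast?, ∀ c, ¬ S b c := by
  induction k generalizing a with
  | zero => exact absurd (hk [] (List.isChain_singleton a)) (by simp)
  | succ k ih =>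
    by_cases hsucc : ∃ b, S a b
    · obtain ⟨b, hab⟩ := hsucc
      obtain ⟨t, ht, hlast⟩ := ih (a := b) fun t ht => by
        simpa using hk (b :: t) (ht.cons_cons hab)
      exact ⟨b :: t, ht.cons_cons hab, by rwa [List.getLast?_cons_cons]⟩
    · exact ⟨[], List.isChain_singleton a, by simpa using hsucc⟩

theorem exists_isMaximalChain_mem {m : ℕ} (hm : ∀ l : List α, l.IsChain S → l.length < m)
    (a : α) : ∃ l, IsMaximalChain S l ∧ a ∈ l := by
  obtain ⟨t, ht, hlast⟩ := exists_isChain_cons_of_length_lt (S := S) (k := m) (a := a)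
    fun t ht => by have := hm _ ht; simp only [List.length_cons] at this; omega
  obtain ⟨s, hs, hfirst⟩ := exists_isChain_cons_of_length_lt (S := fun b c => S c b) (k := m)
    (a := a) fun s hs => by
      have := hm _ (List.isChain_reverse.2 hs)
      simp only [List.length_reverse, List.length_cons] at this
      omega
  have hs' : (s.reverse ++ [a]).IsChain S := by
    rw [← List.reverse_cons]
    exact List.isChain_reverse.2 hs
  refine ⟨s.reverse ++ a :: t, ⟨List.isChain_split.2 ⟨hs', ht⟩, fun b hb => hfirst b ?_, ?_⟩,
    by simp⟩
  · rw [← List.head?_reverse, List.reverse_cons]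
    simpa [List.head?_append] using hb
  · rwa [List.getLast?_append_cons]

end MaximalChain

variable {V A : Type} {Q : BQuiv V A}

section Thread

/-- The composite `ab` is a permitted path of length two. -/
def PermPair (Q : BQuiv V A) (a b : A) : Prop := Q.src a = Q.tgt b ∧ ¬ Q.rel a b

theorem IsGentle.rightUnique_permPair (hQ : Q.IsGentle) : Relator.RightUnique Q.PermPair :=
  fun a b c hb hc => hQ.unique_nonrel_pre a b c hb.1 hc.1 hb.2 hc.2

theorem IsGentle.leftUnique_permPair (hQ : Q.IsGentle) : Relator.LeftUnique Q.PermPair :=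
  fun a a' b h h' => hQ.unique_nonrel_post b a a' h.1 h'.1 h.2 h'.2

theorem IsGentle.exists_length_lt (hQ : Q.IsGentle) :
    ∃ m, ∀ l : List A, l.IsChain Q.PermPair → l.length < m := by
  obtain ⟨m, _, hm⟩ := hQ.admissible
  refine ⟨m, fun l hl => ?_⟩
  by_contra! hlen
  obtain ⟨hpath, hperm⟩ := isChain_and_iff.1 (hl.take m)
  exact hm _ (List.length_take_of_le hlen) hpath hperm

theorem PThread.isMaximalChain (η : PThread Q) : IsMaximalChain Q.PermPair η.1.arrows := by
  obtain ⟨p, ⟨_, hperm, hhead, hlast⟩ | ⟨hnil, _⟩⟩ := η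
  · exact ⟨isChain_and_iff.2 ⟨p.chain, hperm⟩, fun b hb a hab => hab.2 (hhead a b hb hab.1),
      fun a ha c hac => hac.2 (hlast a c ha hac.1)⟩
  · simp only [hnil]
    exact ⟨List.isChain_nil, by simp, by simp⟩

theorem isPermThread_of_isMaximalChain {p : Path Q} (hne : p.arrows ≠ [])
    (h : IsMaximalChain Q.PermPair p.arrows) : IsPermThread Q p :=
  Or.inl ⟨hne, (isChain_and_iff.1 h.isChain).2,
    fun a b hb hab => by_contra fun hr => h.not_rel_head b hb a ⟨hab, hr⟩,
    fun a c ha hac => by_contra fun hr => h.not_getLast_rel a ha c ⟨hac, hr⟩⟩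

theorem Path.ext_of_arrows_ne_nil {p q : Path Q} (hne : p.arrows ≠ []) (h : p.arrows = q.arrows) :
    p = q := by
  have hlast := List.getLast?_eq_some_getLast hne
  have hbase : p.base = q.base := (p.base_eq _ hlast).symm.trans (q.base_eq _ (h ▸ hlast))
  cases p
  cases q
  simp_all only

theorem PThread.eq_and_eq_of_getElem? (hQ : Q.IsGentle) {η η' : PThread Q} {n n' : ℕ} {a : A}
    (ha : η.1.arrows[n]? = some a) (ha' : η'.1.arrows[n']? = some a) : η = η' ∧ n = n' := by
  obtain ⟨hn, h0⟩ := IsMaximalChain.index_eq_and_getElem?_zero_eq hQ.leftUnique_permPair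
    η.isMaximalChain η'.isMaximalChain ha ha'
  have harrows := η.isMaximalChain.eq_of_getElem?_zero_eq hQ.rightUnique_permPair
    η'.isMaximalChain h0
  have hne : η.1.arrows ≠ [] := fun hnil => by simp [hnil] at ha
  exact ⟨Subtype.ext (Path.ext_of_arrows_ne_nil hne harrows), hn⟩

theorem IsGentle.exists_thread_getElem? (hQ : Q.IsGentle) (a : A) :
    ∃ (η : PThread Q) (n : ℕ), η.1.arrows[n]? = some a := by
  obtain ⟨m, hm⟩ := hQ.exists_length_lt
  obtain ⟨l, hl, ha⟩ := exists_isMaximalChain_mem hm a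
  have hne : l ≠ [] := List.ne_nil_of_mem ha
  let p : Path Q := ⟨Q.src (l.getLast hne), l, (isChain_and_iff.1 hl.isChain).1, fun b hb => by
    rw [List.getLast?_eq_some_getLast hne, Option.some_inj] at hb
    rw [hb]⟩
  exact ⟨⟨p, isPermThread_of_isMaximalChain hne hl⟩, List.mem_iff_getElem?.1 ha⟩

theorem Path.vertexAt_eq_tgt {p : Path Q} {n : ℕ} {a : A} (ha : p.arrows[n]? = some a) :
    p.vertexAt n = Q.tgt a := by
  rw [Path.vertexAt, List.head?_drop, ha, Option.elim_some]

theorem Path.vertexAt_succ_eq_src {p : Path Q} {n : ℕ} {a : A} (ha : p.arrows[n]? = some a) :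
    p.vertexAt (n + 1) = Q.src a := by
  cases hb : p.arrows[n + 1]? with
  | some b => exact (p.vertexAt_eq_tgt hb).trans (rel_of_isChain_of_getElem? p.chain ha hb).symm
  | none =>
    have hn := (List.getElem?_eq_some_iff.1 ha).1
    have hn' := List.getElem?_eq_none_iff.1 hb
    have hlast : p.arrows.getLast? = some a := by
      rw [List.getLast?_eq_getElem?, show p.arrows.length - 1 = n by omega, ha]
    rw [Path.vertexAt, List.head?_drop, hb, Option.elim_none, p.base_eq a hlast]

end Thread

section HalfEdge

variable {x y : PSplit Q} {a b : A} {c d : Letter A}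

theorem linv_linv (c : Letter A) : linv (linv c) = c := by
  simp only [linv, Bool.not_not, Prod.mk.eta]

theorem ltgt_linv (c : Letter A) : Q.ltgt (linv c) = Q.lsrc c := by
  rcases c with ⟨a, _ | _⟩ <;> rfl

theorem PSplit.ext_thread_idx (hthread : x.thread = y.thread) (hidx : x.idx = y.idx) : x = y :=
  Subtype.ext (Prod.ext hthread hidx)

/-- `x.HasLetter c`: the target end of the letter `c` is the half-edge `x`, that is, `c` lies on
the thread of `x` and its target vertex is the cut at `x.idx`. -/
def PSplit.HasLetter (x : PSplit Q) : Letter A → Prop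
  | (a, true) => x.thread.1.arrows[x.idx]? = some a
  | (a, false) => ∃ n, x.idx = n + 1 ∧ x.thread.1.arrows[n]? = some a

theorem PSplit.HasLetter.ltgt_eq (h : x.HasLetter c) : Q.ltgt c = x.center := by
  rcases c with ⟨a, _ | _⟩
  · obtain ⟨n, hn, ha⟩ := h
    exact (Path.vertexAt_succ_eq_src ha).symm.trans (congrArg x.thread.1.vertexAt hn.symm)
  · exact (Path.vertexAt_eq_tgt h).symm

theorem PSplit.HasLetter.unique (hQ : Q.IsGentle) (hx : x.HasLetter c) (hy : y.HasLetter c) :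
    x = y := by
  rcases c with ⟨a, _ | _⟩
  · obtain ⟨n, hn, ha⟩ := hx
    obtain ⟨k, hk, hb⟩ := hy
    obtain ⟨hthread, rfl⟩ := PThread.eq_and_eq_of_getElem? hQ ha hb
    exact PSplit.ext_thread_idx hthread (hn.trans hk.symm)
  · obtain ⟨hthread, hidx⟩ := PThread.eq_and_eq_of_getElem? hQ hx hy
    exact PSplit.ext_thread_idx hthread hidx

theorem IsGentle.exists_hasLetter (hQ : Q.IsGentle) (c : Letter A) :
    ∃ x : PSplit Q, x.HasLetter c := by
  obtain ⟨a, s⟩ := c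
  obtain ⟨η, n, ha⟩ := hQ.exists_thread_getElem? a
  have hn := (List.getElem?_eq_some_iff.1 ha).1
  cases s with
  | true => exact ⟨⟨(η, n), hn.le⟩, ha⟩
  | false => exact ⟨⟨(η, n + 1), hn⟩, n, rfl, ha⟩

/-- The half-edge at the target end of a letter. -/
noncomputable def IsGentle.tgtSplit (hQ : Q.IsGentle) (c : Letter A) : PSplit Q :=
  (hQ.exists_hasLetter c).choose

/-- The half-edge at the source end of a letter. -/
noncomputable def IsGentle.srcSplit (hQ : Q.IsGentle) (c : Letter A) : PSplit Q :=
  hQ.tgtSplit (linv c)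

namespace IsGentle

variable (hQ : Q.IsGentle)

theorem hasLetter_tgtSplit (c : Letter A) : (hQ.tgtSplit c).HasLetter c :=
  (hQ.exists_hasLetter c).choose_spec

theorem tgtSplit_eq_iff : hQ.tgtSplit c = x ↔ x.HasLetter c :=
  ⟨fun h => h ▸ hQ.hasLetter_tgtSplit c, fun h => (hQ.hasLetter_tgtSplit c).unique hQ h⟩

theorem srcSplit_linv (c : Letter A) : hQ.srcSplit (linv c) = hQ.tgtSplit c := by
  rw [srcSplit, linv_linv]

theorem srcSplit_direct (a : A) : hQ.srcSplit (a, true) = hQ.tgtSplit (a, false) := rfl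

theorem srcSplit_inverse (a : A) : hQ.srcSplit (a, false) = hQ.tgtSplit (a, true) := rfl

theorem center_tgtSplit (c : Letter A) : (hQ.tgtSplit c).center = Q.ltgt c :=
  (hQ.hasLetter_tgtSplit c).ltgt_eq.symm

theorem center_srcSplit (c : Letter A) : (hQ.srcSplit c).center = Q.lsrc c :=
  (hQ.center_tgtSplit (linv c)).trans (ltgt_linv c)

theorem tgtSplit_direct_spec (a : A) :
    (hQ.tgtSplit (a, true)).thread.1.arrows[(hQ.tgtSplit (a, true)).idx]? = some a :=
  hQ.hasLetter_tgtSplit (a, true)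

theorem thread_eq_and_idx_eq_succ (a : A) :
    (hQ.tgtSplit (a, false)).thread = (hQ.tgtSplit (a, true)).thread ∧
      (hQ.tgtSplit (a, false)).idx = (hQ.tgtSplit (a, true)).idx + 1 := by
  obtain ⟨n, hn, ha⟩ := hQ.hasLetter_tgtSplit (a, false)
  obtain ⟨hthread, rfl⟩ := PThread.eq_and_eq_of_getElem? hQ ha (hQ.tgtSplit_direct_spec a)
  exact ⟨hthread, hn⟩

theorem eq_of_tgtSplit_eq (h : hQ.tgtSplit c = hQ.tgtSplit d) (hsign : c.2 = d.2) : c = d := by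
  have hc := hQ.hasLetter_tgtSplit c
  have hd := hQ.hasLetter_tgtSplit d
  rw [← h] at hd
  obtain ⟨a, s⟩ := c
  obtain ⟨b, s'⟩ := d
  obtain rfl : s = s' := hsign
  cases s with
  | true => exact Prod.ext (Option.some_inj.1 (hc.symm.trans hd)) rfl
  | false =>
    obtain ⟨n, hn, ha⟩ := hc
    obtain ⟨k, hk, hb⟩ := hd
    obtain rfl : n = k := by omega
    exact Prod.ext (Option.some_inj.1 (ha.symm.trans hb)) rfl

theorem tgtSplit_eq_iff_not_rel (hab : Q.src a = Q.tgt b) :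
    hQ.tgtSplit (b, true) = hQ.tgtSplit (a, false) ↔ ¬ Q.rel a b := by
  obtain ⟨n, hn, ha⟩ := hQ.hasLetter_tgtSplit (a, false)
  have hmax := (hQ.tgtSplit (a, false)).thread.isMaximalChain
  refine (hQ.tgtSplit_eq_iff).trans ⟨fun hb => ?_, fun hrel => ?_⟩
  · rw [PSplit.HasLetter, hn] at hb
    exact (rel_of_isChain_of_getElem? hmax.isChain ha hb).2
  · rw [PSplit.HasLetter, hn]
    exact hmax.getElem?_succ hQ.rightUnique_permPair ha ⟨hab, hrel⟩

end IsGentle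

end HalfEdge

section Vertex

variable {v : V} {x y z : PSplit Q} {c d e : Letter A}

/-- The letters ending at the vertex `v`, that is, the ends of arrows at `v`: the end of a loop and
its start are different letters. -/
def lettersAt (Q : BQuiv V A) (v : V) : Set (Letter A) := {c | Q.ltgt c = v}

/-- Every vertex meets finitely many arrows. Without this the cardinalities in `BQuiv.deg` and
`BQuiv.IsGentle` take the junk value `0` of `Nat.card` on infinite types. -/
def LocallyFinite (Q : BQuiv V A) : Prop := ∀ v, (Q.lettersAt v).Finite

theorem setOf_ltgt_eq_and_inverse :
    {c : Letter A | Q.ltgt c = v ∧ c.2 = false} = (fun a => (a, false)) '' {a | Q.src a = v} := by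
  ext ⟨a, _ | _⟩ <;> simp [ltgt]

theorem setOf_ltgt_eq_and_direct :
    {c : Letter A | Q.ltgt c = v ∧ c.2 = true} = (fun a => (a, true)) '' {a | Q.tgt a = v} := by
  ext ⟨a, _ | _⟩ <;> simp [ltgt]

theorem ncard_inverse_lettersAt :
    {c : Letter A | Q.ltgt c = v ∧ c.2 = false}.ncard = Nat.card {a : A // Q.src a = v} := by
  rw [setOf_ltgt_eq_and_inverse, Set.ncard_image_of_injective _ (Prod.mk_left_injective false)]
  rfl

theorem ncard_direct_lettersAt :
    {c : Letter A | Q.ltgt c = v ∧ c.2 = true}.ncard = Nat.card {a : A // Q.tgt a = v} := by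
  rw [setOf_ltgt_eq_and_direct, Set.ncard_image_of_injective _ (Prod.mk_left_injective true)]
  rfl

theorem IsGentle.ncard_lettersAt_sign_le (hQ : Q.IsGentle) (v : V) (s : Bool) :
    {c : Letter A | Q.ltgt c = v ∧ c.2 = s}.ncard ≤ 2 := by
  cases s with
  | false => exact ncard_inverse_lettersAt.trans_le (hQ.out_le v)
  | true => exact ncard_direct_lettersAt.trans_le (hQ.in_le v)

theorem LocallyFinite.deg_eq_ncard (hfin : Q.LocallyFinite) (v : V) :
    Q.deg v = (Q.lettersAt v).ncard := by
  have hsplit : Q.lettersAt v =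
      {c | Q.ltgt c = v ∧ c.2 = false} ∪ {c | Q.ltgt c = v ∧ c.2 = true} := by
    ext ⟨a, _ | _⟩ <;> simp [lettersAt]
  have hdisj : Disjoint {c : Letter A | Q.ltgt c = v ∧ c.2 = false}
      {c | Q.ltgt c = v ∧ c.2 = true} :=
    Set.disjoint_left.2 fun c hc hc' => Bool.false_ne_true (hc.2.symm.trans hc'.2)
  rw [hsplit, Set.ncard_union_eq hdisj ((hfin v).subset fun c hc => hc.1)
    ((hfin v).subset fun c hc => hc.1), ncard_inverse_lettersAt, ncard_direct_lettersAt, deg]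

/-- The trivial path at `v` is a permitted thread. -/
def HasTrivialThread (Q : BQuiv V A) (v : V) : Prop :=
  Q.deg v = 1 ∨ (Q.deg v = 2 ∧ ∃ α β, Q.src α = v ∧ Q.tgt β = v ∧ ¬ Q.rel α β)

namespace IsGentle

variable (hQ : Q.IsGentle)

theorem hasTrivialThread_of_tgtSplit_eq (hfin : Q.LocallyFinite) (hc : c ∈ Q.lettersAt v)
    (hall : ∀ d ∈ Q.lettersAt v, hQ.tgtSplit d = hQ.tgtSplit c) : Q.HasTrivialThread v := by
  rw [HasTrivialThread, hfin.deg_eq_ncard]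
  have hsame : ∀ d ∈ Q.lettersAt v, d.2 = c.2 → d = c := fun d hd =>
    hQ.eq_of_tgtSplit_eq (hall d hd)
  by_cases hopp : ∃ d ∈ Q.lettersAt v, d.2 ≠ c.2
  · obtain ⟨d, hd, hne⟩ := hopp
    have hpair : Q.lettersAt v = {c, d} := Set.Subset.antisymm
      (fun e he => (eq_or_ne e.2 c.2).imp (hsame e he) fun hec => hQ.eq_of_tgtSplit_eq
        ((hall e he).trans (hall d hd).symm) ((Bool.eq_not.2 hec).trans (Bool.eq_not.2 hne).symm))
      (Set.pair_subset hc hd)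
    refine Or.inr ⟨hpair ▸ Set.ncard_pair fun hcd => hne (congrArg Prod.snd hcd.symm), ?_⟩
    have hcd := hall d hd
    obtain ⟨a, _ | _⟩ := c <;> obtain ⟨b, _ | _⟩ := d <;> try exact absurd rfl hne
    · exact ⟨a, b, hc, hd, (hQ.tgtSplit_eq_iff_not_rel (hc.trans hd.symm)).1 hcd⟩
    · exact ⟨b, a, hd, hc, (hQ.tgtSplit_eq_iff_not_rel (hd.trans hc.symm)).1 hcd.symm⟩
  · push Not at hopp
    have hsingle : Q.lettersAt v = {c} :=
      Set.eq_singleton_iff_unique_mem.2 ⟨hc, fun d hd => hsame d hd (hopp d hd)⟩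
    exact Or.inl (hsingle ▸ Set.ncard_singleton c)

theorem exists_forall_tgtSplit_eq (hfin : Q.LocallyFinite) (hv : Q.HasTrivialThread v) :
    ∃ c ∈ Q.lettersAt v, ∀ d ∈ Q.lettersAt v, hQ.tgtSplit d = hQ.tgtSplit c := by
  rw [HasTrivialThread, hfin.deg_eq_ncard] at hv
  rcases hv with hv | ⟨hv, α, β, hα, hβ, hrel⟩
  · obtain ⟨c, hc⟩ := Set.ncard_eq_one.1 hv
    rw [hc]
    exact ⟨c, rfl, by rintro d rfl; rfl⟩
  · have hpair : {((α, false) : Letter A), (β, true)} = Q.lettersAt v :=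
      Set.eq_of_subset_of_ncard_le (Set.pair_subset hα hβ)
        (by rw [hv, Set.ncard_pair (by simp)]) (hfin v)
    refine ⟨(α, false), hα, fun d hd => ?_⟩
    rcases hpair ▸ hd with rfl | rfl
    · rfl
    · exact (hQ.tgtSplit_eq_iff_not_rel (hα.trans hβ.symm)).2 hrel

theorem rel_of_tgtSplit_ne {a b : A} (hab : Q.src a = Q.tgt b)
    (hne : hQ.tgtSplit (b, true) ≠ hQ.tgtSplit (a, false)) : Q.rel a b :=
  not_not.1 fun h => hne ((hQ.tgtSplit_eq_iff_not_rel hab).2 h)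

theorem eq_of_tgtSplit_ne (hd : Q.ltgt d = Q.ltgt c) (he : Q.ltgt e = Q.ltgt c)
    (hd_sign : d.2 = !c.2) (he_sign : e.2 = !c.2) (hd_ne : hQ.tgtSplit d ≠ hQ.tgtSplit c)
    (he_ne : hQ.tgtSplit e ≠ hQ.tgtSplit c) : d = e := by
  obtain ⟨a, s⟩ := c
  obtain ⟨b, s₁⟩ := d
  obtain ⟨b', s₂⟩ := e
  obtain rfl : s₁ = !s := hd_sign
  obtain rfl : s₂ = !s := he_sign
  cases s with
  | false => exact congrArg (·, true) (hQ.unique_rel_pre a b b'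
      (hQ.rel_of_tgtSplit_ne hd.symm hd_ne) (hQ.rel_of_tgtSplit_ne he.symm he_ne))
  | true => exact congrArg (·, false) (hQ.unique_rel_post a b b'
      (hQ.rel_of_tgtSplit_ne hd hd_ne.symm) (hQ.rel_of_tgtSplit_ne he he_ne.symm))

theorem tgtSplit_eq_or_eq_or_eq (hfin : Q.LocallyFinite) (hc : c ∈ Q.lettersAt v)
    (hd : d ∈ Q.lettersAt v) (he : e ∈ Q.lettersAt v) :
    hQ.tgtSplit c = hQ.tgtSplit d ∨ hQ.tgtSplit c = hQ.tgtSplit e ∨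
      hQ.tgtSplit d = hQ.tgtSplit e := by
  by_contra! ⟨hcd, hce, hde⟩
  have hcd' : Q.ltgt c = Q.ltgt d := hc.trans hd.symm
  have hce' : Q.ltgt c = Q.ltgt e := hc.trans he.symm
  have hde' : Q.ltgt d = Q.ltgt e := hd.trans he.symm
  by_cases hscd : c.2 = d.2 <;> by_cases hsce : c.2 = e.2
  · refine (hQ.ncard_lettersAt_sign_le v c.2).not_gt ?_
    rw [Set.two_lt_ncard_iff ((hfin v).subset fun c hc => hc.1)]
    exact ⟨c, d, e, ⟨hc, rfl⟩, ⟨hd, hscd.symm⟩, ⟨he, hsce.symm⟩, ne_of_apply_ne _ hcd,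
      ne_of_apply_ne _ hce, ne_of_apply_ne _ hde⟩
  · exact hcd (congrArg _ (hQ.eq_of_tgtSplit_ne hce' hde' (Bool.eq_not.2 hsce)
      (Bool.eq_not.2 (hscd ▸ hsce)) hce hde))
  · exact hce (congrArg _ (hQ.eq_of_tgtSplit_ne hcd' hde'.symm (Bool.eq_not.2 hscd)
      (Bool.eq_not.2 (hsce ▸ hscd)) hcd hde.symm))
  · exact hde (congrArg _ (hQ.eq_of_tgtSplit_ne hcd'.symm hce'.symm (Bool.eq_not.2 (Ne.symm hscd))
      (Bool.eq_not.2 (Ne.symm hsce)) hcd.symm hce.symm))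

end IsGentle

theorem PSplit.exists_hasLetter (hx : x.thread.1.arrows ≠ []) : ∃ c, x.HasLetter c := by
  have hidx : x.idx ≤ x.thread.1.arrows.length := x.2
  rcases hidx.lt_or_eq with hlt | heq
  · exact ⟨(x.thread.1.arrows[x.idx], true), List.getElem?_eq_getElem hlt⟩
  · have hpos := List.length_pos_iff.2 hx
    exact ⟨(x.thread.1.arrows[x.idx - 1], false), x.idx - 1, by omega,
      List.getElem?_eq_getElem (by omega)⟩

theorem PSplit.HasLetter.arrows_ne_nil (h : x.HasLetter c) : x.thread.1.arrows ≠ [] := by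
  intro hnil
  rcases c with ⟨a, _ | _⟩
  · obtain ⟨n, _, ha⟩ := h
    simp [hnil] at ha
  · simp [PSplit.HasLetter, hnil] at h

theorem PSplit.center_eq_base (hx : x.thread.1.arrows = []) : x.center = x.thread.1.base := by
  change x.thread.1.vertexAt x.idx = _
  rw [Path.vertexAt, hx, List.drop_nil, List.head?_nil, Option.elim_none]

theorem PSplit.hasTrivialThread (hx : x.thread.1.arrows = []) : Q.HasTrivialThread x.center := by
  rw [PSplit.center_eq_base hx]
  exact x.thread.2.elim (fun h => absurd hx h.1) fun h => h.2

theorem PSplit.eq_of_arrows_eq_nil (hx : x.thread.1.arrows = []) (hy : y.thread.1.arrows = [])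
    (hxy : x.center = y.center) : x = y := by
  have hidx {w : PSplit Q} (hw : w.thread.1.arrows = []) : w.idx = 0 :=
    Nat.le_zero.1 (w.2.trans_eq (List.length_eq_zero_iff.2 hw))
  rw [PSplit.center_eq_base hx, PSplit.center_eq_base hy] at hxy
  refine PSplit.ext_thread_idx (Subtype.ext ?_) ((hidx hx).trans (hidx hy).symm)
  generalize x.thread.1 = p at *
  generalize y.thread.1 = q at *
  cases p
  cases q
  simp_all only

theorem HasTrivialThread.exists_split (hv : Q.HasTrivialThread v) :
    ∃ x : PSplit Q, x.center = v ∧ x.thread.1.arrows = [] := by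
  let p : Path Q := ⟨v, [], List.isChain_nil, by simp⟩
  exact ⟨⟨(⟨p, Or.inr ⟨rfl, hv⟩⟩, 0), Nat.zero_le _⟩, rfl, rfl⟩

namespace IsGentle

variable (hQ : Q.IsGentle)
include hQ

theorem eq_of_ne_trivial (hfin : Q.LocallyFinite) (hx : x.thread.1.arrows = [])
    (hy : y.center = x.center) (hz : z.center = x.center) (hyx : y ≠ x) (hzx : z ≠ x) : y = z := by
  obtain ⟨c, _, hall⟩ := hQ.exists_forall_tgtSplit_eq hfin (PSplit.hasTrivialThread hx)
  have heq {w : PSplit Q} (hw : w.center = x.center) (hwx : w ≠ x) : w = hQ.tgtSplit c := by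
    obtain ⟨d, hd⟩ := PSplit.exists_hasLetter
      fun hnil => hwx (PSplit.eq_of_arrows_eq_nil hnil hx hw)
    exact (hQ.tgtSplit_eq_iff.2 hd).symm.trans (hall d (hd.ltgt_eq.trans hw))
  exact (heq hy hyx).trans (heq hz hzx).symm

theorem eq_of_center_eq (hfin : Q.LocallyFinite) (hy : y.center = x.center)
    (hz : z.center = x.center) (hyx : y ≠ x) (hzx : z ≠ x) : y = z := by
  by_contra hyz
  by_cases hnx : x.thread.1.arrows = []
  · exact hyz (hQ.eq_of_ne_trivial hfin hnx hy hz hyx hzx)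
  by_cases hny : y.thread.1.arrows = []
  · exact hzx (hQ.eq_of_ne_trivial hfin hny (hz.trans hy.symm) hy.symm (Ne.symm hyz) hyx.symm)
  by_cases hnz : z.thread.1.arrows = []
  · exact hyx (hQ.eq_of_ne_trivial hfin hnz (hy.trans hz.symm) hz.symm hyz hzx.symm)
  obtain ⟨c, hc⟩ := PSplit.exists_hasLetter hnx
  obtain ⟨d, hd⟩ := PSplit.exists_hasLetter hny
  obtain ⟨e, he⟩ := PSplit.exists_hasLetter hnz
  have hletters := hQ.tgtSplit_eq_or_eq_or_eq hfin (v := x.center) hc.ltgt_eq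
    (hd.ltgt_eq.trans hy) (he.ltgt_eq.trans hz)
  rw [hQ.tgtSplit_eq_iff.2 hc, hQ.tgtSplit_eq_iff.2 hd, hQ.tgtSplit_eq_iff.2 he] at hletters
  exact hletters.elim (fun h => hyx h.symm) fun h => h.elim (fun h => hzx h.symm) hyz

theorem exists_ne_center_eq (hfin : Q.LocallyFinite) (x : PSplit Q) :
    ∃ y : PSplit Q, y ≠ x ∧ y.center = x.center := by
  by_cases hother : ∃ c ∈ Q.lettersAt x.center, hQ.tgtSplit c ≠ x
  · obtain ⟨c, hc, hne⟩ := hother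
    exact ⟨hQ.tgtSplit c, hne, (hQ.center_tgtSplit c).trans hc⟩
  push Not at hother
  by_cases hx : x.thread.1.arrows = []
  · obtain ⟨c, hc, _⟩ := hQ.exists_forall_tgtSplit_eq hfin (PSplit.hasTrivialThread hx)
    exact absurd hx (hQ.tgtSplit_eq_iff.1 (hother c hc)).arrows_ne_nil
  · obtain ⟨c, hc⟩ := PSplit.exists_hasLetter hx
    obtain ⟨y, hy, hnil⟩ := (hQ.hasTrivialThread_of_tgtSplit_eq hfin hc.ltgt_eq
      fun d hd => (hother d hd).trans (hQ.tgtSplit_eq_iff.2 hc).symm).exists_split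
    exact ⟨y, fun hyx => hx (hyx ▸ hnil), hy⟩

end IsGentle

end Vertex

section OrderedEdge

theorem DOE.inv_involutive : Function.Involutive (DOE.inv (Q := Q)) := fun _ => rfl

theorem IsGentle.tS_bijective (hQ : Q.IsGentle) (hfin : Q.LocallyFinite) :
    Function.Bijective (DOE.tS (Q := Q)) := by
  constructor
  · rintro ⟨⟨x, y⟩, hyx, hy⟩ ⟨⟨_, z⟩, hzx, hz⟩ rfl
    exact Subtype.ext (congrArg (Prod.mk x)
      (hQ.eq_of_center_eq hfin hy.symm hz.symm hyx.symm hzx.symm))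
  · intro x
    obtain ⟨y, hyx, hy⟩ := hQ.exists_ne_center_eq hfin x
    exact ⟨⟨(x, y), hyx.symm, hy.symm⟩, rfl⟩

theorem IsGentle.sS_bijective (hQ : Q.IsGentle) (hfin : Q.LocallyFinite) :
    Function.Bijective (DOE.sS (Q := Q)) :=
  (hQ.tS_bijective hfin).comp DOE.inv_involutive.bijective

end OrderedEdge

section Segment

variable {x y : PSplit Q} {s : Bool} {c : Letter A}

/-- The homotopy letter read off when moving along a thread from its half-edge `x` to its
half-edge `y`, so that `⟨i|j⟩` is the segment from the source half-edge of `i` to the target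
half-edge of `j`. -/
def seg (x y : PSplit Q) : List (Letter A) :=
  if x.idx < y.idx then
    ((x.thread.1.arrows.drop x.idx).take (y.idx - x.idx)).map (fun a => (a, true))
  else (((x.thread.1.arrows.drop y.idx).take (x.idx - y.idx)).map (fun a => (a, false))).reverse

theorem letterOf_eq_seg (i j : DOE Q) : letterOf i j = seg i.sS j.tS := rfl

theorem seg_of_le (h : x.idx ≤ y.idx) :
    seg x y = ((x.thread.1.arrows.drop x.idx).take (y.idx - x.idx)).map (fun a => (a, true)) := by
  rcases h.lt_or_eq with hlt | heq
  · exact if_pos hlt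
  · simp [seg, heq]

theorem seg_of_ge (h : y.idx ≤ x.idx) :
    seg x y =
      (((x.thread.1.arrows.drop y.idx).take (x.idx - y.idx)).map (fun a => (a, false))).reverse :=
  if_neg h.not_gt

theorem seg_self (x : PSplit Q) : seg x x = [] := by
  rw [seg_of_le le_rfl, Nat.sub_self, List.take_zero, List.map_nil]

theorem seg_symm (hthread : x.thread = y.thread) : seg y x = ((seg x y).map linv).reverse := by
  rcases le_total x.idx y.idx with h | h
  · simp [seg_of_le h, seg_of_ge h, hthread, linv, Function.comp_def]
  · simp [seg_of_le h, seg_of_ge h, hthread, linv, Function.comp_def]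

theorem seg_eq_cons_direct {x' : PSplit Q} {a : A} (hthread : x.thread = x'.thread)
    (hidx : x'.idx = x.idx + 1) (ha : x.thread.1.arrows[x.idx]? = some a) (hy : x'.idx ≤ y.idx) :
    seg x y = (a, true) :: seg x' y := by
  obtain ⟨hn, rfl⟩ := List.getElem?_eq_some_iff.1 ha
  rw [seg_of_le (by omega), seg_of_le hy, List.drop_eq_getElem_cons hn, ← hthread, hidx,
    show y.idx - x.idx = y.idx - (x.idx + 1) + 1 by omega, List.take_succ_cons, List.map_cons]

theorem seg_eq_cons_inverse {x' : PSplit Q} {a : A} (hthread : x.thread = x'.thread)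
    (hidx : x'.idx = x.idx + 1) (ha : x.thread.1.arrows[x.idx]? = some a) (hy : y.idx ≤ x.idx) :
    seg x' y = (a, false) :: seg x y := by
  have hlast : (x.thread.1.arrows.drop y.idx)[x.idx - y.idx]? = some a := by
    rw [List.getElem?_drop, Nat.add_sub_cancel' hy, ha]
  rw [seg_of_ge (by omega), seg_of_ge hy, ← hthread, hidx, Nat.sub_add_comm hy, List.take_add_one,
    hlast, Option.toList_some, List.map_append, List.map_singleton, List.reverse_concat]

/-- `Reaches s x y`: the half-edge `y` lies on the thread of `x`, in the direction travelled by the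
letters of sign `s`. -/
def Reaches : Bool → PSplit Q → PSplit Q → Prop
  | true, x, y => x.thread = y.thread ∧ x.idx ≤ y.idx
  | false, x, y => x.thread = y.thread ∧ y.idx ≤ x.idx

theorem Reaches.thread_eq (h : Reaches s x y) : x.thread = y.thread := by
  cases s <;> exact h.1

theorem Reaches.refl (s : Bool) (x : PSplit Q) : Reaches s x x := by
  cases s <;> exact ⟨rfl, le_rfl⟩

theorem exists_reaches (h : x.thread = y.thread) : ∃ s, Reaches s x y :=
  (le_total x.idx y.idx).elim (fun hle => ⟨true, h, hle⟩) fun hle => ⟨false, h, hle⟩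

namespace IsGentle

variable (hQ : Q.IsGentle)

theorem reaches_tgtSplit_of_srcSplit (h : Reaches c.2 (hQ.srcSplit c) y) :
    Reaches c.2 (hQ.tgtSplit c) y ∧ hQ.tgtSplit c ≠ y := by
  obtain ⟨a, _ | _⟩ := c
  all_goals
    obtain ⟨hthread, hidx⟩ := hQ.thread_eq_and_idx_eq_succ a
    obtain ⟨hy, hle⟩ := h
  · rw [srcSplit_inverse] at hy hle
    exact ⟨⟨hthread.trans hy, by omega⟩, by rintro rfl; omega⟩
  · rw [srcSplit_direct] at hy hle
    exact ⟨⟨hthread.symm.trans hy, by omega⟩, by rintro rfl; omega⟩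

theorem exists_tgtSplit_eq_and_reaches (h : Reaches s x y) (hne : x ≠ y) :
    ∃ c : Letter A, c.2 = s ∧ hQ.tgtSplit c = x ∧ Reaches s (hQ.srcSplit c) y := by
  have hlen : x.idx ≤ x.thread.1.arrows.length := x.2
  have hlen' : y.idx ≤ y.thread.1.arrows.length := y.2
  have hidx_ne : x.idx ≠ y.idx := fun heq => hne (PSplit.ext_thread_idx h.thread_eq heq)
  cases s with
  | true =>
    obtain ⟨hthread, hle⟩ := h
    rw [← hthread] at hlen'
    have hx : hQ.tgtSplit (x.thread.1.arrows[x.idx], true) = x :=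
      hQ.tgtSplit_eq_iff.2 (List.getElem?_eq_getElem (by omega))
    obtain ⟨hthread', hidx⟩ := hQ.thread_eq_and_idx_eq_succ x.thread.1.arrows[x.idx]
    rw [hx] at hthread' hidx
    exact ⟨_, rfl, hx, hthread'.trans hthread, by rw [srcSplit_direct]; omega⟩
  | false =>
    obtain ⟨hthread, hle⟩ := h
    have hx : hQ.tgtSplit (x.thread.1.arrows[x.idx - 1], false) = x :=
      hQ.tgtSplit_eq_iff.2 ⟨x.idx - 1, by omega, List.getElem?_eq_getElem (by omega)⟩
    obtain ⟨hthread', hidx⟩ := hQ.thread_eq_and_idx_eq_succ x.thread.1.arrows[x.idx - 1]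
    rw [hx] at hthread' hidx
    exact ⟨_, rfl, hx, hthread'.symm.trans hthread, by rw [srcSplit_inverse]; omega⟩

theorem seg_cons (h : Reaches c.2 (hQ.srcSplit c) y) :
    seg (hQ.tgtSplit c) y = c :: seg (hQ.srcSplit c) y := by
  obtain ⟨a, _ | _⟩ := c
  all_goals obtain ⟨hthread, hidx⟩ := hQ.thread_eq_and_idx_eq_succ a
  · exact seg_eq_cons_inverse hthread.symm hidx (hQ.tgtSplit_direct_spec a) h.2
  · exact seg_eq_cons_direct hthread.symm hidx (hQ.tgtSplit_direct_spec a) h.2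

end IsGentle

end Segment

section Run

variable {x y : PSplit Q} {s : Bool} {c d : Letter A} {m : List (Letter A)}

/-- The composite `cd` is a reduced walk of length two of the quiver. -/
def ReducedPair (Q : BQuiv V A) (c d : Letter A) : Prop := Q.lsrc c = Q.ltgt d ∧ c ≠ linv d

/-- The letters `c` and `d` follow each other along one thread, in the same direction. A homotopy
letter is a nonempty chain for this relation. -/
def IsGentle.SameRun (hQ : Q.IsGentle) (c d : Letter A) : Prop :=
  hQ.srcSplit c = hQ.tgtSplit d ∧ c.2 = d.2

namespace IsGentle

variable (hQ : Q.IsGentle)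
include hQ

theorem sameRun_of_reducedPair (h : Q.ReducedPair c d) (hcd : hQ.srcSplit c = hQ.tgtSplit d) :
    hQ.SameRun c d := by
  refine ⟨hcd, by_contra fun hsign => h.2 ?_⟩
  rw [← hQ.eq_of_tgtSplit_eq hcd (Bool.eq_not.2 (Ne.symm hsign)).symm, linv_linv]

theorem SameRun.reducedPair (h : hQ.SameRun c d) : Q.ReducedPair c d := by
  refine ⟨?_, fun hcd => ?_⟩
  · rw [← hQ.center_srcSplit, ← hQ.center_tgtSplit, h.1]
  · exact Bool.not_ne_self d.2 ((congrArg Prod.snd hcd).symm.trans h.2)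

theorem reducedPair_of_srcSplit_ne (h : Q.lsrc c = Q.ltgt d)
    (hne : hQ.srcSplit c ≠ hQ.tgtSplit d) : Q.ReducedPair c d :=
  ⟨h, fun hcd => hne (hcd ▸ hQ.srcSplit_linv d)⟩

theorem seg_ne_nil (hthread : x.thread = y.thread) (hne : x ≠ y) : seg x y ≠ [] := by
  obtain ⟨s, h⟩ := exists_reaches hthread
  obtain ⟨c, rfl, rfl, hsrc⟩ := hQ.exists_tgtSplit_eq_and_reaches h hne
  rw [hQ.seg_cons hsrc]
  exact List.cons_ne_nil _ _

theorem reaches_induction {motive : PSplit Q → Prop} (refl : motive y)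
    (step : ∀ c, Reaches c.2 (hQ.srcSplit c) y → motive (hQ.srcSplit c) → motive (hQ.tgtSplit c))
    (h : Reaches s x y) : motive x := by
  induction hn : (seg x y).length generalizing x with
  | zero => exact (by_contra fun hne => hQ.seg_ne_nil h.thread_eq hne (List.length_eq_zero_iff.1 hn)
      : x = y) ▸ refl
  | succ n ih =>
    have hne : x ≠ y := by
      rintro rfl
      rw [seg_self] at hn
      exact absurd hn n.succ_ne_zero.symm
    obtain ⟨c, rfl, rfl, hsrc⟩ := hQ.exists_tgtSplit_eq_and_reaches h hne
    rw [hQ.seg_cons hsrc] at hn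
    exact step c hsrc (ih hsrc (Nat.succ_injective hn))

theorem tgtSplit_eq_of_mem_head?_seg (h : Reaches s x y) (hd : d ∈ (seg x y).head?) :
    hQ.tgtSplit d = x ∧ d.2 = s := by
  rcases eq_or_ne x y with rfl | hne
  · simp [seg_self] at hd
  · obtain ⟨c, rfl, rfl, hsrc⟩ := hQ.exists_tgtSplit_eq_and_reaches h hne
    rw [hQ.seg_cons hsrc] at hd
    obtain rfl : c = d := Option.some_inj.1 hd
    exact ⟨rfl, rfl⟩

theorem srcSplit_eq_of_mem_getLast?_seg (hthread : x.thread = y.thread)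
    (hd : d ∈ (seg x y).getLast?) : hQ.srcSplit d = y := by
  have hd' : linv d ∈ (seg y x).head? := by
    rw [seg_symm hthread, List.head?_reverse, List.getLast?_map]
    exact Option.mem_map_of_mem _ hd
  obtain ⟨s, h⟩ := exists_reaches hthread.symm
  exact (hQ.tgtSplit_eq_of_mem_head?_seg h hd').1

theorem isChain_sameRun_seg (hthread : x.thread = y.thread) : (seg x y).IsChain hQ.SameRun := by
  obtain ⟨s, h⟩ := exists_reaches hthread
  refine hQ.reaches_induction (motive := fun x => (seg x y).IsChain hQ.SameRun) ?_ ?_ h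
  · rw [seg_self]
    exact List.isChain_nil
  · intro c h ih
    rw [hQ.seg_cons h]
    refine List.isChain_cons.2 ⟨fun d hd => ?_, ih⟩
    obtain ⟨hd, hsign⟩ := hQ.tgtSplit_eq_of_mem_head?_seg h hd
    exact ⟨hd.symm, hsign.symm⟩

theorem reaches_and_seg_eq (h : (c :: m).IsChain hQ.SameRun) (hd : d ∈ (c :: m).getLast?) :
    Reaches c.2 (hQ.srcSplit c) (hQ.srcSplit d) ∧
      seg (hQ.tgtSplit c) (hQ.srcSplit d) = c :: m := by
  induction m generalizing c with
  | nil =>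
    obtain rfl : c = d := Option.some_inj.1 hd
    exact ⟨Reaches.refl _ _, by rw [hQ.seg_cons (Reaches.refl _ _), seg_self]⟩
  | cons e m ih =>
    obtain ⟨⟨hce, hsign⟩, hm⟩ := List.isChain_cons_cons.1 h
    obtain ⟨hreach, hseg⟩ := ih hm (by rwa [List.getLast?_cons_cons] at hd)
    have hreach' : Reaches c.2 (hQ.srcSplit c) (hQ.srcSplit d) := by
      rw [hce, hsign]
      exact (hQ.reaches_tgtSplit_of_srcSplit hreach).1
    exact ⟨hreach', by rw [hQ.seg_cons hreach', hce, hseg]⟩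

end IsGentle

end Run

section Ribbon

variable {i k : DOE Q} {l l' : List (DOE Q)} {m : List (Letter A)}

/-- The composite `ik` is a reduced walk of length two of the marked ribbon graph. -/
def Linked (i k : DOE Q) : Prop := i.sS.thread = k.tS.thread ∧ i.sS ≠ k.tS

theorem IsGentle.isChain_linked_iff (hQ : Q.IsGentle) (hfin : Q.LocallyFinite) :
    l.IsChain Linked ↔ IsDWalk Q l ∧ IsDRed Q l := by
  have hred (i k : DOE Q) : i.sS ≠ k.tS ↔ k ≠ i.inv :=
    ne_comm.trans ((hQ.tS_bijective hfin).injective.ne_iff (x := k) (y := i.inv))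
  rw [show (Linked : DOE Q → DOE Q → Prop) = fun i k => i.svx = k.tvx ∧ k ≠ i.inv from
    funext₂ fun i k => propext (and_congr_right fun _ => hred i k), isChain_and_iff]
  rfl

/-- The sequence of homotopy letters whose concatenation is `∇(l)`. -/
def homotopyLetters (l : List (DOE Q)) : List (List (Letter A)) := List.zipWith letterOf l l.tail

theorem flatten_homotopyLetters (l : List (DOE Q)) : (homotopyLetters l).flatten = nablaW l := rfl

theorem homotopyLetters_cons_cons (i k : DOE Q) (l : List (DOE Q)) :
    homotopyLetters (i :: k :: l) = letterOf i k :: homotopyLetters (k :: l) := rfl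

/-- An ordered edge `k` separates `g` from `g'`: read from left to right, the letter walk `g` ends
at the target half-edge of `k`, and `g'` begins at its source half-edge. -/
def IsGentle.Cut (hQ : Q.IsGentle) (g g' : List (Letter A)) : Prop :=
  ∃ k : DOE Q, (∀ c ∈ g.getLast?, hQ.srcSplit c = k.tS) ∧ ∀ d ∈ g'.head?, hQ.tgtSplit d = k.sS

namespace IsGentle

variable (hQ : Q.IsGentle)
include hQ

theorem isChain_cut_homotopyLetters (h : l.IsChain Linked) :
    (homotopyLetters l).IsChain hQ.Cut := by
  induction l with
  | nil => exact List.isChain_nil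
  | cons i l ih =>
    rcases l with _ | ⟨k, _ | ⟨j, l⟩⟩
    · exact List.isChain_nil
    · exact List.isChain_singleton _
    · obtain ⟨⟨hik, _⟩, h⟩ := List.isChain_cons_cons.1 h
      obtain ⟨s, hreach⟩ := exists_reaches (List.isChain_cons_cons.1 h).1.1
      exact (ih h).cons_cons ⟨k, fun c hc => hQ.srcSplit_eq_of_mem_getLast?_seg hik hc,
        fun d hd => (hQ.tgtSplit_eq_of_mem_head?_seg hreach hd).1⟩

theorem mem_homotopyLetters {g : List (Letter A)} (h : l.IsChain Linked)
    (hg : g ∈ homotopyLetters l) : g ≠ [] ∧ g.IsChain hQ.SameRun := by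
  induction l with
  | nil => exact absurd hg List.not_mem_nil
  | cons i l ih =>
    cases l with
    | nil => exact absurd hg List.not_mem_nil
    | cons k l =>
      obtain ⟨⟨hthread, hne⟩, h⟩ := List.isChain_cons_cons.1 h
      rcases List.mem_cons.1 hg with rfl | hg
      · exact ⟨hQ.seg_ne_nil hthread hne, hQ.isChain_sameRun_seg hthread⟩
      · exact ih h hg

theorem Cut.srcSplit_ne_and_lsrc_eq {g g' : List (Letter A)} {c d : Letter A} (h : hQ.Cut g g')
    (hc : c ∈ g.getLast?) (hd : d ∈ g'.head?) :
    hQ.srcSplit c ≠ hQ.tgtSplit d ∧ Q.lsrc c = Q.ltgt d := by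
  obtain ⟨k, hk, hk'⟩ := h
  rw [← hQ.center_srcSplit, ← hQ.center_tgtSplit, hk c hc, hk' d hd]
  exact k.2

theorem nablaW_ne_nil (h : (i :: k :: l).IsChain Linked) : nablaW (i :: k :: l) ≠ [] := by
  obtain ⟨hthread, hne⟩ := (List.isChain_cons_cons.1 h).1
  rw [← flatten_homotopyLetters, homotopyLetters_cons_cons, List.flatten_cons]
  exact List.append_ne_nil_of_left_ne_nil (hQ.seg_ne_nil hthread hne) _

theorem isChain_reducedPair_nablaW (h : l.IsChain Linked) :
    (nablaW l).IsChain Q.ReducedPair := by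
  have hnil : [] ∉ homotopyLetters l := fun hmem => (hQ.mem_homotopyLetters h hmem).1 rfl
  rw [← flatten_homotopyLetters, List.isChain_flatten hnil]
  refine ⟨fun g hg => (hQ.mem_homotopyLetters h hg).2.imp fun _ _ hcd => hcd.reducedPair hQ,
    (hQ.isChain_cut_homotopyLetters h).imp fun g g' hcut c hc d hd => ?_⟩
  obtain ⟨hne, hlsrc⟩ := hcut.srcSplit_ne_and_lsrc_eq hQ hc hd
  exact hQ.reducedPair_of_srcSplit_ne hlsrc hne

theorem splitBy_nablaW (h : l.IsChain Linked) :
    (nablaW l).splitBy (fun c d => hQ.srcSplit c = hQ.tgtSplit d) = homotopyLetters l := by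
  have hmem {g : List (Letter A)} (hg : g ∈ homotopyLetters l) := hQ.mem_homotopyLetters h hg
  refine List.splitBy_flatten (fun hnil => (hmem hnil).1 rfl)
    (fun g hg => (hmem hg).2.imp fun c d hcd => decide_eq_true hcd.1) ?_
  refine ((hQ.isChain_cut_homotopyLetters h).imp_of_mem_imp
    (fun g g' hg hg' hcut => ⟨(hmem hg).1, (hmem hg').1, decide_eq_false ?_⟩))
  exact (hcut.srcSplit_ne_and_lsrc_eq hQ (List.getLast_mem_getLast? _) (List.head_mem_head? _)).1

theorem letterOf_inj (hfin : Q.LocallyFinite) {i' k' : DOE Q} (h : Linked i k)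
    (h' : Linked i' k') (heq : letterOf i k = letterOf i' k') : i = i' ∧ k = k' := by
  rw [letterOf_eq_seg, letterOf_eq_seg] at heq
  have hne := hQ.seg_ne_nil h.1 h.2
  obtain ⟨s, hreach⟩ := exists_reaches h.1
  obtain ⟨s', hreach'⟩ := exists_reaches h'.1
  have hhead := List.head_mem_head? hne
  have hlast := List.getLast_mem_getLast? hne
  constructor
  · apply (hQ.sS_bijective hfin).injective
    exact (hQ.tgtSplit_eq_of_mem_head?_seg hreach hhead).1.symm.trans
      (hQ.tgtSplit_eq_of_mem_head?_seg hreach' (heq ▸ hhead)).1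
  · apply (hQ.tS_bijective hfin).injective
    exact (hQ.srcSplit_eq_of_mem_getLast?_seg h.1 hlast).symm.trans
      (hQ.srcSplit_eq_of_mem_getLast?_seg h'.1 (heq ▸ hlast))

theorem homotopyLetters_inj (hfin : Q.LocallyFinite) {i' k' : DOE Q}
    (h : (i :: k :: l).IsChain Linked) (h' : (i' :: k' :: l').IsChain Linked)
    (heq : homotopyLetters (i :: k :: l) = homotopyLetters (i' :: k' :: l')) :
    i :: k :: l = i' :: k' :: l' := by
  induction l generalizing i k i' k' l' with
  | nil =>
    obtain ⟨hletter, htail⟩ := List.cons_eq_cons.1 heq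
    obtain ⟨rfl, rfl⟩ := hQ.letterOf_inj hfin (List.isChain_cons_cons.1 h).1
      (List.isChain_cons_cons.1 h').1 hletter
    cases l' with
    | nil => rfl
    | cons j' l' => exact absurd htail (List.cons_ne_nil _ _).symm
  | cons j l ih =>
    obtain ⟨hik, h⟩ := List.isChain_cons_cons.1 h
    obtain ⟨hik', h'⟩ := List.isChain_cons_cons.1 h'
    obtain ⟨hletter, htail⟩ := List.cons_eq_cons.1 heq
    cases l' with
    | nil => exact absurd htail (List.cons_ne_nil _ _)
    | cons j' l' => rw [(hQ.letterOf_inj hfin hik hik' hletter).1, ih h h' htail]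

theorem exists_linked_letterOf_eq (hfin : Q.LocallyFinite) {g : List (Letter A)} (hne : g ≠ [])
    (hg : g.IsChain hQ.SameRun) :
    ∃ i k : DOE Q, Linked i k ∧ letterOf i k = g ∧ (∀ c ∈ g.head?, hQ.tgtSplit c = i.sS) ∧
      ∀ d ∈ g.getLast?, hQ.srcSplit d = k.tS := by
  obtain ⟨c, m, rfl⟩ := List.exists_cons_of_ne_nil hne
  have hlast := List.getLast_mem_getLast? hne
  obtain ⟨hreach, hseg⟩ := hQ.reaches_and_seg_eq hg hlast
  obtain ⟨hreach', hxy⟩ := hQ.reaches_tgtSplit_of_srcSplit hreach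
  obtain ⟨i, hi⟩ := (hQ.sS_bijective hfin).surjective (hQ.tgtSplit c)
  obtain ⟨k, hk⟩ := (hQ.tS_bijective hfin).surjective (hQ.srcSplit ((c :: m).getLast hne))
  rw [← hi, ← hk] at hreach' hxy hseg
  refine ⟨i, k, ⟨hreach'.thread_eq, hxy⟩, hseg, fun b hb => ?_, fun b hb => ?_⟩
  · rw [← Option.some_inj.1 hb, hi]
  · rw [Option.mem_unique hb hlast, hk]

theorem exists_homotopyLetters_eq (hfin : Q.LocallyFinite) {g : List (Letter A)}
    {G : List (List (Letter A))} (hmem : ∀ g' ∈ g :: G, g' ≠ [] ∧ g'.IsChain hQ.SameRun)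
    (hcut : (g :: G).IsChain hQ.Cut) :
    ∃ (i k : DOE Q) (l : List (DOE Q)), (i :: k :: l).IsChain Linked ∧
      homotopyLetters (i :: k :: l) = g :: G ∧ ∀ c ∈ g.head?, hQ.tgtSplit c = i.sS := by
  induction G generalizing g with
  | nil =>
    obtain ⟨hne, hrun⟩ := hmem g List.mem_cons_self
    obtain ⟨i, k, hik, rfl, hhead, _⟩ := hQ.exists_linked_letterOf_eq hfin hne hrun
    exact ⟨i, k, [], List.isChain_pair.2 hik, rfl, hhead⟩
  | cons g' G ih =>
    obtain ⟨⟨hne, hrun⟩, hmem'⟩ := List.forall_mem_cons.1 hmem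
    obtain ⟨i, k, hik, hletter, hhead, hlast⟩ := hQ.exists_linked_letterOf_eq hfin hne hrun
    obtain ⟨⟨k₀, hk₀, hk₀'⟩, hcut⟩ := List.isChain_cons_cons.1 hcut
    obtain ⟨k', j, l, hl, hletters, hk'⟩ := ih hmem' hcut
    have hc := List.getLast_mem_getLast? hne
    have hd := List.head_mem_head? (hmem' g' List.mem_cons_self).1
    obtain rfl : k = k₀ := (hQ.tS_bijective hfin).injective ((hlast _ hc).symm.trans (hk₀ _ hc))
    obtain rfl : k' = k := (hQ.sS_bijective hfin).injective ((hk' _ hd).symm.trans (hk₀' _ hd))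
    exact ⟨i, k', j :: l, hl.cons_cons hik,
      by rw [homotopyLetters_cons_cons, hletter, hletters], hhead⟩

theorem isChain_cut_of_isChain_flatten {G : List (List (Letter A))} (hnil : [] ∉ G)
    (hG : G.flatten.IsChain Q.ReducedPair)
    (hcut : G.IsChain fun g g' => ∃ hg hg',
      hQ.srcSplit (g.getLast hg) ≠ hQ.tgtSplit (g'.head hg')) : G.IsChain hQ.Cut := by
  have hjunction := ((List.isChain_flatten hnil).1 hG).2
  refine (isChain_and_iff.2 ⟨hcut, hjunction⟩).imp fun g g' ⟨⟨hg, hg', hne⟩, hred⟩ => ?_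
  have hlsrc := (hred _ (List.getLast_mem_getLast? hg) _ (List.head_mem_head? hg')).1
  refine ⟨⟨(hQ.srcSplit (g.getLast hg), hQ.tgtSplit (g'.head hg')), hne, ?_⟩,
    fun c hc => ?_, fun d hd => ?_⟩
  · rw [hQ.center_srcSplit, hQ.center_tgtSplit, hlsrc]
  · rw [Option.mem_unique hc (List.getLast_mem_getLast? hg)]
    rfl
  · rw [Option.mem_unique hd (List.head_mem_head? hg')]
    rfl

theorem exists_nablaW_eq (hfin : Q.LocallyFinite) (hne : m ≠ []) (hm : m.IsChain Q.ReducedPair) :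
    ∃ (i k : DOE Q) (l : List (DOE Q)), (i :: k :: l).IsChain Linked ∧
      nablaW (i :: k :: l) = m := by
  let r : Letter A → Letter A → Bool := fun c d => hQ.srcSplit c = hQ.tgtSplit d
  have hnil : [] ∉ m.splitBy r := List.nil_notMem_splitBy r m
  have hm' : (m.splitBy r).flatten.IsChain Q.ReducedPair := by rwa [List.flatten_splitBy]
  have hrun : ∀ g ∈ m.splitBy r, g ≠ [] ∧ g.IsChain hQ.SameRun := fun g hg =>
    ⟨List.ne_nil_of_mem_splitBy hg,
      (isChain_and_iff.2 ⟨((List.isChain_flatten hnil).1 hm').1 g hg,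
        List.isChain_of_mem_splitBy hg⟩).imp fun c d h =>
          hQ.sameRun_of_reducedPair h.1 (of_decide_eq_true h.2)⟩
  have hcut := hQ.isChain_cut_of_isChain_flatten hnil hm'
    ((List.isChain_getLast_head_splitBy r m).imp fun g g' ⟨hg, hg', h⟩ =>
      ⟨hg, hg', of_decide_eq_false h⟩)
  obtain ⟨g, G, hG⟩ := List.exists_cons_of_ne_nil (List.splitBy_ne_nil.2 hne : m.splitBy r ≠ [])
  rw [hG] at hrun hcut
  obtain ⟨i, k, l, hl, hletters, _⟩ := hQ.exists_homotopyLetters_eq hfin hrun hcut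
  exact ⟨i, k, l, hl, by rw [← flatten_homotopyLetters, hletters, ← hG, List.flatten_splitBy]⟩

end IsGentle

end Ribbon

section Inverse

variable {i k : DOE Q} {l : List (DOE Q)}

theorem letterOf_inv (h : i.svx = k.tvx) :
    letterOf k.inv i.inv = ((letterOf i k).map linv).reverse :=
  seg_symm h

theorem homotopyLetters_append_pair (l : List (DOE Q)) (k i : DOE Q) :
    homotopyLetters (l ++ [k, i]) = homotopyLetters (l ++ [k]) ++ [letterOf k i] := by
  induction l with
  | nil => rfl
  | cons j l ih =>
    cases l with
    | nil => rfl
    | cons j' l => exact congrArg (letterOf j j' :: ·) ih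

theorem homotopyLetters_reverse_map_inv (h : IsDWalk Q l) :
    homotopyLetters (l.map DOE.inv).reverse =
      ((homotopyLetters l).map fun g => (g.map linv).reverse).reverse := by
  induction l with
  | nil => rfl
  | cons i l ih =>
    cases l with
    | nil => rfl
    | cons k l =>
      obtain ⟨hik, h⟩ := List.isChain_cons_cons.1 h
      rw [List.map_cons, List.map_cons, List.reverse_cons, List.reverse_cons, List.append_assoc,
        List.singleton_append, homotopyLetters_append_pair, ← List.reverse_cons, ← List.map_cons,
        ih h, letterOf_inv hik, homotopyLetters_cons_cons, List.map_cons, List.reverse_cons]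

theorem nablaW_reverse_map_inv (h : IsDWalk Q l) :
    nablaW (l.map DOE.inv).reverse = ((nablaW l).map linv).reverse := by
  rw [← flatten_homotopyLetters, ← flatten_homotopyLetters, homotopyLetters_reverse_map_inv h,
    List.map_flatten, List.reverse_flatten, List.map_map]
  rfl

end Inverse

theorem IsGentle.bijOn_nablaW (hQ : Q.IsGentle) (hfin : Q.LocallyFinite) :
    Set.BijOn nablaW {l : List (DOE Q) | (IsDWalk Q l ∧ IsDRed Q l) ∧ 2 ≤ l.length}
      {m | m ≠ [] ∧ Q.WalkChain m ∧ m.IsChain fun c d => c ≠ linv d} := by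
  have hred (m : List (Letter A)) : m.IsChain Q.ReducedPair ↔
      Q.WalkChain m ∧ m.IsChain fun c d => c ≠ linv d := isChain_and_iff
  simp only [← hQ.isChain_linked_iff hfin, ← hred]
  refine ⟨?_, ?_, ?_⟩
  · rintro l ⟨hl, hlen⟩
    obtain ⟨i, k, l, rfl⟩ := exists_eq_cons_cons_of_two_le_length hlen
    exact ⟨hQ.nablaW_ne_nil hl, hQ.isChain_reducedPair_nablaW hl⟩
  · rintro l ⟨hl, hlen⟩ l' ⟨hl', hlen'⟩ heq
    obtain ⟨i, k, l, rfl⟩ := exists_eq_cons_cons_of_two_le_length hlen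
    obtain ⟨i', k', l', rfl⟩ := exists_eq_cons_cons_of_two_le_length hlen'
    refine hQ.homotopyLetters_inj hfin hl hl' ?_
    rw [← hQ.splitBy_nablaW hl, ← hQ.splitBy_nablaW hl', heq]
  · rintro m ⟨hne, hm⟩
    obtain ⟨i, k, l, hl, rfl⟩ := hQ.exists_nablaW_eq hfin hne hm
    exact ⟨_, ⟨hl, le_add_self⟩, rfl⟩

end BQuiv

theorem stmt7_general {V A : Type} (Q : BQuiv V A) (hQ : Q.IsGentle) (hfin : Q.LocallyFinite) :
    (∀ l : List (DOE Q), IsDWalk Q l → IsDRed Q l → 2 ≤ l.length →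
      nablaW l ≠ [] ∧ Q.WalkChain (nablaW l) ∧
      (nablaW l).IsChain (fun c d => c ≠ linv d)) ∧
    (∀ l l' : List (DOE Q), IsDWalk Q l → IsDRed Q l → 2 ≤ l.length →
      IsDWalk Q l' → IsDRed Q l' → 2 ≤ l'.length → nablaW l = nablaW l' → l = l') ∧
    (∀ m : List (Letter A), m ≠ [] → Q.WalkChain m →
      m.IsChain (fun c d => c ≠ linv d) →
      ∃ l : List (DOE Q), IsDWalk Q l ∧ IsDRed Q l ∧ 2 ≤ l.length ∧ nablaW l = m) ∧
    (∀ l : List (DOE Q), IsDWalk Q l → IsDRed Q l → 2 ≤ l.length →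
      nablaW ((l.map DOE.inv).reverse) = ((nablaW l).map linv).reverse) := by
  obtain ⟨hmaps, hinj, hsurj⟩ := hQ.bijOn_nablaW hfin
  refine ⟨fun l hw hr hl => hmaps ⟨⟨hw, hr⟩, hl⟩, fun l l' hw hr hl hw' hr' hl' heq =>
    hinj ⟨⟨hw, hr⟩, hl⟩ ⟨⟨hw', hr'⟩, hl'⟩ heq, fun m hne hm hred => ?_,
    fun l hw _ _ => nablaW_reverse_map_inv hw⟩
  obtain ⟨l, ⟨⟨hw, hr⟩, hl⟩, heq⟩ := hsurj ⟨hne, hm, hred⟩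
  exact ⟨l, hw, hr, hl, heq⟩

/-- Let `(Q, I)` be a gentle bound quiver with marked ribbon graph
`(G, ≤) = △(Q, I)`, whose edges are identified with `Q₀`.  The map sending a reduced
walk `w = i₁i₂⋯i_L i_{L+1}` of `G` to `∇(w) = ⟨i₁|i₂⟩⟨i₂|i₃⟩⋯⟨i_L|i_{L+1}⟩` is a
bijection from the set of reduced walks of `G` of length at least two onto the set of
non-trivial reduced walks of the quiver `Q`, and it satisfies `∇(w⁻¹) = ∇(w)⁻¹`. -/
theorem stmt7 {V A : Type} [Fintype V] [Fintype A] (Q : BQuiv V A) (hQ : Q.IsGentle) :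
    (∀ l : List (DOE Q), IsDWalk Q l → IsDRed Q l → 2 ≤ l.length →
      nablaW l ≠ [] ∧ Q.WalkChain (nablaW l) ∧
      (nablaW l).Chain' (fun c d => c ≠ linv d)) ∧
    (∀ l l' : List (DOE Q), IsDWalk Q l → IsDRed Q l → 2 ≤ l.length →
      IsDWalk Q l' → IsDRed Q l' → 2 ≤ l'.length → nablaW l = nablaW l' → l = l') ∧
    (∀ m : List (Letter A), m ≠ [] → Q.WalkChain m →
      m.Chain' (fun c d => c ≠ linv d) →
      ∃ l : List (DOE Q), IsDWalk Q l ∧ IsDRed Q l ∧ 2 ≤ l.length ∧ nablaW l = m) ∧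
    (∀ l : List (DOE Q), IsDWalk Q l → IsDRed Q l → 2 ≤ l.length →
      nablaW ((l.map DOE.inv).reverse) = ((nablaW l).map linv).reverse) :=
  stmt7_general Q hQ fun _ => Set.toFinite _
end
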